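/- If δ1 is a Hamming distortion measure, then for all d2 ∈ ℝ₊, R(0,d2) = R_CR(0,d2) = max{ H(X|Y), R_{Y|X}(d2) }. -/

import Mathlib

open scoped BigOperators Classical

noncomputable section

namespace TWR

/-- Base-2 Shannon entropy of a finitely supported distribution (with the
convention `0 * log 0 = 0`, automatic since `Real.logb 2 0 = 0`). -/
def H2 {α : Type} [Fintype α] (p : α → ℝ) : ℝ :=
  -∑ a, p a * Real.logb 2 (p a)

/-- `p` is a probability mass function. -/
def IsPmf {α : Type} [Fintype α] (p : α → ℝ) : Prop :=
  (∀ a, 0 ≤ p a) ∧ ∑ a, p a = 1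

/-- `W` is a conditional pmf. -/
def IsCondPmf {α β : Type} [Fintype β] (W : α → β → ℝ) : Prop :=
  ∀ a, IsPmf (W a)

/-- Mutual information `I(A;B)` (base 2) of a joint pmf on `α × β`. -/
def MI {α β : Type} [Fintype α] [Fintype β] (p : α × β → ℝ) : ℝ :=
  H2 (fun a => ∑ b, p (a, b)) + H2 (fun b => ∑ a, p (a, b)) - H2 p

/-- Conditional entropy `H(A|B)` of a joint pmf on `α × β`. -/
def condH {α β : Type} [Fintype α] [Fintype β] (p : α × β → ℝ) : ℝ :=
  H2 p - H2 (fun b => ∑ a, p (a, b))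

/-- Conditional mutual information `I(A;C|B)` of a joint pmf on `α × β × γ`,
conditioning on the middle coordinate (`I(A;C|B) = H(A,B)+H(B,C)-H(A,B,C)-H(B)`). -/
def condMI {α β γ : Type} [Fintype α] [Fintype β] [Fintype γ] (p : α × β × γ → ℝ) : ℝ :=
  H2 (fun ab : α × β => ∑ c, p (ab.1, ab.2, c)) +
    H2 (fun bc : β × γ => ∑ a, p (a, bc.1, bc.2)) -
    H2 p - H2 (fun b : β => ∑ a, ∑ c, p (a, b, c))

/-- Markov chain `A − B − C` for a joint pmf on `α × β × γ`. -/
def Markov {α β γ : Type} [Fintype α] [Fintype β] [Fintype γ] (p : α × β × γ → ℝ) : Prop :=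
  ∀ a b c, p (a, b, c) * (∑ a', ∑ c', p (a', b, c')) =
    (∑ c', p (a, b, c')) * (∑ a', p (a', b, c))

variable {𝒳 𝒴 Xh Yh 𝒲 𝒰 𝒱 : Type}
variable [Fintype 𝒳] [Fintype 𝒴] [Fintype Xh] [Fintype Yh]
variable [Fintype 𝒲] [Fintype 𝒰] [Fintype 𝒱]

/-- The i.i.d. block source. -/
def iid (q : 𝒳 × 𝒴 → ℝ) (n : ℕ) : (Fin n → 𝒳) × (Fin n → 𝒴) → ℝ :=
  fun xy => ∏ i, q (xy.1 i, xy.2 i)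

/-- Average distortion at receiver 1 of the RD code `(f, g1, ·)`. -/
def Delta1 (q : 𝒳 × 𝒴 → ℝ) (δ1 : 𝒳 → Xh → ℝ) {n m : ℕ}
    (f : (Fin n → 𝒳) × (Fin n → 𝒴) → Fin m)
    (g1 : Fin m × (Fin n → 𝒴) → Fin n → Xh) : ℝ :=
  ∑ xy : (Fin n → 𝒳) × (Fin n → 𝒴),
    iid q n xy * ((n : ℝ)⁻¹ * ∑ i, δ1 (xy.1 i) (g1 (f xy, xy.2) i))

/-- Average distortion at receiver 2 of the RD code `(f, ·, g2)`. -/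
def Delta2 (q : 𝒳 × 𝒴 → ℝ) (δ2 : 𝒴 → Yh → ℝ) {n m : ℕ}
    (f : (Fin n → 𝒳) × (Fin n → 𝒴) → Fin m)
    (g2 : Fin m × (Fin n → 𝒳) → Fin n → Yh) : ℝ :=
  ∑ xy : (Fin n → 𝒳) × (Fin n → 𝒴),
    iid q n xy * ((n : ℝ)⁻¹ * ∑ i, δ2 (xy.2 i) (g2 (f xy, xy.1) i))

/-- `r` is a `(d1,d2)`-achievable rate (source coding). -/
def RDAchievable (q : 𝒳 × 𝒴 → ℝ) (δ1 : 𝒳 → Xh → ℝ) (δ2 : 𝒴 → Yh → ℝ)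
    (d1 d2 r : ℝ) : Prop :=
  ∀ ε > (0 : ℝ), ∃ (n m : ℕ) (f : (Fin n → 𝒳) × (Fin n → 𝒴) → Fin m)
    (g1 : Fin m × (Fin n → 𝒴) → Fin n → Xh)
    (g2 : Fin m × (Fin n → 𝒳) → Fin n → Yh),
    0 < n ∧ Real.logb 2 m / n ≤ r + ε ∧
    Delta1 q δ1 f g1 ≤ d1 + ε ∧ Delta2 q δ2 f g2 ≤ d2 + ε

/-- The rate-distortion function `R(d1,d2)`. -/
def RD (q : 𝒳 × 𝒴 → ℝ) (δ1 : 𝒳 → Xh → ℝ) (δ2 : 𝒴 → Yh → ℝ) (d1 d2 : ℝ) : ℝ :=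
  sInf {r : ℝ | 0 ≤ r ∧ RDAchievable q δ1 δ2 d1 d2 r}

/-- `r` is `(d1,d2)`-achievable with common reconstructions. -/
def CRAchievable (q : 𝒳 × 𝒴 → ℝ) (δ1 : 𝒳 → Xh → ℝ) (δ2 : 𝒴 → Yh → ℝ)
    (d1 d2 r : ℝ) : Prop :=
  ∀ ε > (0 : ℝ), ∃ (n m : ℕ) (f : (Fin n → 𝒳) × (Fin n → 𝒴) → Fin m)
    (g1 : Fin m × (Fin n → 𝒴) → Fin n → Xh)
    (g2 : Fin m × (Fin n → 𝒳) → Fin n → Yh)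
    (φ1 : Fin m × (Fin n → 𝒴) → Fin n → Yh)
    (φ2 : Fin m × (Fin n → 𝒳) → Fin n → Xh),
    0 < n ∧ Real.logb 2 m / n ≤ r + ε ∧
    Delta1 q δ1 f g1 ≤ d1 + ε ∧ Delta2 q δ2 f g2 ≤ d2 + ε ∧
    (∑ xy : (Fin n → 𝒳) × (Fin n → 𝒴),
      if φ2 (f xy, xy.1) = g1 (f xy, xy.2) then 0 else iid q n xy) ≤ ε ∧
    (∑ xy : (Fin n → 𝒳) × (Fin n → 𝒴),
      if φ1 (f xy, xy.2) = g2 (f xy, xy.1) then 0 else iid q n xy) ≤ ε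

/-- The common-reconstruction rate-distortion function `R_CR(d1,d2)`. -/
def CRRD (q : 𝒳 × 𝒴 → ℝ) (δ1 : 𝒳 → Xh → ℝ) (δ2 : 𝒴 → Yh → ℝ) (d1 d2 : ℝ) : ℝ :=
  sInf {r : ℝ | 0 ≤ r ∧ CRAchievable q δ1 δ2 d1 d2 r}

/-- The conditional rate-distortion function `R_{X|Y}(d1)`. -/
def condRD (q : 𝒳 × 𝒴 → ℝ) (δ1 : 𝒳 → Xh → ℝ) (d1 : ℝ) : ℝ :=
  sInf {r : ℝ | ∃ W : 𝒳 × 𝒴 → Xh → ℝ, IsCondPmf W ∧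
    (∑ x, ∑ y, ∑ xh, q (x, y) * W (x, y) xh * δ1 x xh) ≤ d1 ∧
    r = condMI (fun t : 𝒳 × 𝒴 × Xh => q (t.1, t.2.1) * W (t.1, t.2.1) t.2.2)}

/-- Swap the two components of a joint source. -/
def swap (q : 𝒳 × 𝒴 → ℝ) : 𝒴 × 𝒳 → ℝ := fun t => q (t.2, t.1)

/-- The marginal rate-distortion function `R_X(d)`. -/
def margRD (qX : 𝒳 → ℝ) (δ1 : 𝒳 → Xh → ℝ) (d1 : ℝ) : ℝ :=
  sInf {r : ℝ | ∃ W : 𝒳 → Xh → ℝ, IsCondPmf W ∧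
    (∑ x, ∑ xh, qX x * W x xh * δ1 x xh) ≤ d1 ∧
    r = MI (fun t : 𝒳 × Xh => qX t.1 * W t.1 t.2)}

def margX (q : 𝒳 × 𝒴 → ℝ) : 𝒳 → ℝ := fun x => ∑ y, q (x, y)
def margY (q : 𝒳 × 𝒴 → ℝ) : 𝒴 → ℝ := fun y => ∑ x, q (x, y)

/-- The joint rate-distortion function `R_{XY}(d1,d2)`. -/
def jointRD (q : 𝒳 × 𝒴 → ℝ) (δ1 : 𝒳 → Xh → ℝ) (δ2 : 𝒴 → Yh → ℝ) (d1 d2 : ℝ) : ℝ :=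
  sInf {r : ℝ | ∃ W : 𝒳 × 𝒴 → Xh × Yh → ℝ, IsCondPmf W ∧
    (∑ xy : 𝒳 × 𝒴, ∑ z : Xh × Yh, q xy * W xy z * δ1 xy.1 z.1) ≤ d1 ∧
    (∑ xy : 𝒳 × 𝒴, ∑ z : Xh × Yh, q xy * W xy z * δ2 xy.2 z.2) ≤ d2 ∧
    r = MI (fun t : (𝒳 × 𝒴) × (Xh × Yh) => q t.1 * W t.1 t.2)}

/-- The Wyner–Ziv rate-distortion function `R^{WZ}_{X|Y}(d1)`
(with auxiliary alphabet of cardinality `|𝒳| + 1`). -/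
def wzRD (q : 𝒳 × 𝒴 → ℝ) (δ1 : 𝒳 → Xh → ℝ) (d1 : ℝ) : ℝ :=
  sInf {r : ℝ | ∃ p : Fin (Fintype.card 𝒳 + 1) × 𝒳 × 𝒴 → ℝ, IsPmf p ∧
    (∀ x y, (∑ a, p (a, x, y)) = q (x, y)) ∧ Markov p ∧
    (∃ π1 : Fin (Fintype.card 𝒳 + 1) × 𝒴 → Xh,
      (∑ a, ∑ x, ∑ y, p (a, x, y) * δ1 x (π1 (a, y))) ≤ d1) ∧
    r = condMI (fun t : 𝒳 × 𝒴 × Fin (Fintype.card 𝒳 + 1) => p (t.2.2, t.1, t.2.1))}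

/-- The set over which the single-letter CR formula
`max{I(X;X̂,Ŷ|Y), I(Y;X̂,Ŷ|X)}` is minimised. -/
def crFormulaSet (q : 𝒳 × 𝒴 → ℝ) (δ1 : 𝒳 → Xh → ℝ) (δ2 : 𝒴 → Yh → ℝ)
    (d1 d2 : ℝ) : Set ℝ :=
  {r : ℝ | ∃ W : 𝒳 × 𝒴 → Xh × Yh → ℝ, IsCondPmf W ∧
    (∑ x, ∑ y, ∑ z : Xh × Yh, q (x, y) * W (x, y) z * δ1 x z.1) ≤ d1 ∧
    (∑ x, ∑ y, ∑ z : Xh × Yh, q (x, y) * W (x, y) z * δ2 y z.2) ≤ d2 ∧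
    r = max
      (condMI (fun t : 𝒳 × 𝒴 × (Xh × Yh) => q (t.1, t.2.1) * W (t.1, t.2.1) t.2.2))
      (condMI (fun t : 𝒴 × 𝒳 × (Xh × Yh) => q (t.2.1, t.1) * W (t.2.1, t.1) t.2.2))}

/-- Joint law of source blocks and channel outputs for a JSC encoder. -/
def jscP (q : 𝒳 × 𝒴 → ℝ) (qUV : 𝒲 → 𝒰 × 𝒱 → ℝ) {n m : ℕ}
    (f : (Fin n → 𝒳) × (Fin n → 𝒴) → Fin m → 𝒲)
    (x : Fin n → 𝒳) (y : Fin n → 𝒴) (u : Fin m → 𝒰) (v : Fin m → 𝒱) : ℝ :=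
  (∏ i, q (x i, y i)) * ∏ j, qUV (f (x, y) j) (u j, v j)

/-- `(d1,d2)` is achievable by joint source-channel coding with source rate `κs`
and channel rate `κc` (bandwidth expansion `κc/κs`). -/
def JSCAchievable (q : 𝒳 × 𝒴 → ℝ) (qUV : 𝒲 → 𝒰 × 𝒱 → ℝ)
    (δ1 : 𝒳 → Xh → ℝ) (δ2 : 𝒴 → Yh → ℝ) (κs κc d1 d2 : ℝ) : Prop :=
  ∀ ε > (0 : ℝ), ∃ (t n m : ℕ) (f : (Fin n → 𝒳) × (Fin n → 𝒴) → Fin m → 𝒲)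
    (g1 : (Fin m → 𝒰) × (Fin n → 𝒴) → Fin n → Xh)
    (g2 : (Fin m → 𝒱) × (Fin n → 𝒳) → Fin n → Yh),
    0 < t ∧ (n : ℝ) = κs * t ∧ (m : ℝ) = κc * t ∧
    (∑ x : Fin n → 𝒳, ∑ y : Fin n → 𝒴, ∑ u : Fin m → 𝒰, ∑ v : Fin m → 𝒱,
      jscP q qUV f x y u v * ((n : ℝ)⁻¹ * ∑ i, δ1 (x i) (g1 (u, y) i))) ≤ d1 + ε ∧
    (∑ x : Fin n → 𝒳, ∑ y : Fin n → 𝒴, ∑ u : Fin m → 𝒰, ∑ v : Fin m → 𝒱,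
      jscP q qUV f x y u v * ((n : ℝ)⁻¹ * ∑ i, δ2 (y i) (g2 (v, x) i))) ≤ d2 + ε

/-- `(d1,d2)` is achievable by joint source-channel coding with common
reconstructions, source rate `κs` and channel rate `κc`. -/
def CRJSCAchievable (q : 𝒳 × 𝒴 → ℝ) (qUV : 𝒲 → 𝒰 × 𝒱 → ℝ)
    (δ1 : 𝒳 → Xh → ℝ) (δ2 : 𝒴 → Yh → ℝ) (κs κc d1 d2 : ℝ) : Prop :=
  ∀ ε > (0 : ℝ), ∃ (t n m : ℕ) (f : (Fin n → 𝒳) × (Fin n → 𝒴) → Fin m → 𝒲)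
    (g1 : (Fin m → 𝒰) × (Fin n → 𝒴) → Fin n → Xh)
    (g2 : (Fin m → 𝒱) × (Fin n → 𝒳) → Fin n → Yh)
    (φ1 : (Fin m → 𝒰) × (Fin n → 𝒴) → Fin n → Yh)
    (φ2 : (Fin m → 𝒱) × (Fin n → 𝒳) → Fin n → Xh),
    0 < t ∧ (n : ℝ) = κs * t ∧ (m : ℝ) = κc * t ∧
    (∑ x : Fin n → 𝒳, ∑ y : Fin n → 𝒴, ∑ u : Fin m → 𝒰, ∑ v : Fin m → 𝒱,
      jscP q qUV f x y u v * ((n : ℝ)⁻¹ * ∑ i, δ1 (x i) (g1 (u, y) i))) ≤ d1 + ε ∧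
    (∑ x : Fin n → 𝒳, ∑ y : Fin n → 𝒴, ∑ u : Fin m → 𝒰, ∑ v : Fin m → 𝒱,
      jscP q qUV f x y u v * ((n : ℝ)⁻¹ * ∑ i, δ2 (y i) (g2 (v, x) i))) ≤ d2 + ε ∧
    (∑ x : Fin n → 𝒳, ∑ y : Fin n → 𝒴, ∑ u : Fin m → 𝒰, ∑ v : Fin m → 𝒱,
      if φ2 (v, x) = g1 (u, y) then 0 else jscP q qUV f x y u v) ≤ ε ∧
    (∑ x : Fin n → 𝒳, ∑ y : Fin n → 𝒴, ∑ u : Fin m → 𝒰, ∑ v : Fin m → 𝒱,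
      if φ1 (u, y) = g2 (v, x) then 0 else jscP q qUV f x y u v) ≤ ε

/-- `I(W;U)` under the joint law `pW · qUV` (U-marginal of the broadcast channel). -/
def chMIU (qUV : 𝒲 → 𝒰 × 𝒱 → ℝ) (pW : 𝒲 → ℝ) : ℝ :=
  MI (fun t : 𝒲 × 𝒰 => pW t.1 * ∑ v, qUV t.1 (t.2, v))

/-- `I(W;V)` under the joint law `pW · qUV` (V-marginal of the broadcast channel). -/
def chMIV (qUV : 𝒲 → 𝒰 × 𝒱 → ℝ) (pW : 𝒲 → ℝ) : ℝ :=
  MI (fun t : 𝒲 × 𝒱 => pW t.1 * ∑ u, qUV t.1 (u, t.2))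

/-- The doubly symmetric binary source with crossover probability `ρ`. -/
def dsbs (ρ : ℝ) : Bool × Bool → ℝ :=
  fun t => if t.1 = t.2 then (1 - ρ) / 2 else ρ / 2

/-- The Hamming distortion measure. -/
def dHam {α : Type} : α → α → ℝ := fun a b => if a = b then 0 else 1

/-- The binary entropy function (base 2). -/
def binEnt (x : ℝ) : ℝ := -(x * Real.logb 2 x) - (1 - x) * Real.logb 2 (1 - x)

/-- A difference distortion measure built from a per-letter function of the
(modular) difference. -/
def diffD {l : ℕ} (δ : Fin l → ℝ) : Fin l → Fin l → ℝ := fun a b => δ (a - b)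

/-- Capacity of the modulo-additive channel with noise `pN` and input
distortion constraint `d`. -/
def Cadd {l : ℕ} (δ : Fin l → ℝ) (d : ℝ) (pN : Fin l → ℝ) : ℝ :=
  sSup {r : ℝ | ∃ pW : Fin l → ℝ, IsPmf pW ∧ (∑ w, pW w * δ w) ≤ d ∧
    r = MI (fun t : Fin l × Fin l => pW t.1 * pN (t.2 - t.1))}

/-- The minimax (worst-noise) capacity under distortion constraint `d`. -/
def Cworst {l : ℕ} (δ : Fin l → ℝ) (d : ℝ) : ℝ :=
  sInf {r : ℝ | ∃ pN : Fin l → ℝ, IsPmf pN ∧ (∑ x, pN x * δ x) ≤ d ∧ r = Cadd δ d pN}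

/-- Wyner's common information `K(X;Y)` (auxiliary alphabet of size 4). -/
def wynerK (q : 𝒳 × 𝒴 → ℝ) : ℝ :=
  sInf {r : ℝ | ∃ W : 𝒳 × 𝒴 → Fin 4 → ℝ, IsCondPmf W ∧
    Markov (fun t : 𝒳 × Fin 4 × 𝒴 => q (t.1, t.2.2) * W (t.1, t.2.2) t.2.1) ∧
    r = MI (fun t : (𝒳 × 𝒴) × Fin 4 => q t.1 * W t.1 t.2)}

/-- The one-description (Kimura–Uyematsu) upper bound `R_U*(d1,d2)`. -/
def oneDescUB (q : 𝒳 × 𝒴 → ℝ) (δ1 : 𝒳 → Xh → ℝ) (δ2 : 𝒴 → Yh → ℝ) (d1 d2 : ℝ) : ℝ :=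
  sInf {r : ℝ | ∃ W : 𝒳 × 𝒴 → Fin (Fintype.card 𝒳 * Fintype.card 𝒴 + 2) → ℝ,
    IsCondPmf W ∧
    (∃ π1 : Fin (Fintype.card 𝒳 * Fintype.card 𝒴 + 2) × 𝒴 → Xh,
      (∑ x, ∑ y, ∑ c, q (x, y) * W (x, y) c * δ1 x (π1 (c, y))) ≤ d1) ∧
    (∃ π2 : Fin (Fintype.card 𝒳 * Fintype.card 𝒴 + 2) × 𝒳 → Yh,
      (∑ x, ∑ y, ∑ c, q (x, y) * W (x, y) c * δ2 y (π2 (c, x))) ≤ d2) ∧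
    r = max
      (condMI (fun t : 𝒳 × 𝒴 × Fin (Fintype.card 𝒳 * Fintype.card 𝒴 + 2) =>
        q (t.1, t.2.1) * W (t.1, t.2.1) t.2.2))
      (condMI (fun t : 𝒴 × 𝒳 × Fin (Fintype.card 𝒳 * Fintype.card 𝒴 + 2) =>
        q (t.2.1, t.1) * W (t.2.1, t.1) t.2.2))}

end TWR

namespace TWR

lemma sum_pi_prod {n : ℕ} {α : Type} [Fintype α] (F : Fin n → α → ℝ) :
    ∑ a : Fin n → α, ∏ i, F i (a i) = ∏ i, ∑ x, F i x := by
  rw [Finset.prod_univ_sum]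
  simp [Fintype.piFinset_univ]

lemma sum_pi_pmf {n : ℕ} {α : Type} [Fintype α] {p : α → ℝ} (hp : IsPmf p) :
    ∑ a : Fin n → α, ∏ i, p (a i) = 1 := by
  rw [sum_pi_prod (fun _ => p)]
  simp [hp.2]

lemma sum_pi_marg {n : ℕ} {α : Type} [Fintype α] {p : α → ℝ} (hp : IsPmf p) (h : α → ℝ)
    (j : Fin n) :
    ∑ a : Fin n → α, (∏ i, p (a i)) * h (a j) = ∑ x, p x * h x := by
  have h1 : ∀ a : Fin n → α, (∏ i, p (a i)) * h (a j) =
      ∏ i, (p (a i) * if i = j then h (a i) else 1) := by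
    intro a
    rw [Finset.prod_mul_distrib]
    simp
  simp_rw [h1]
  rw [sum_pi_prod (fun i x => p x * if i = j then h x else 1)]
  rw [Finset.prod_eq_single j]
  · simp
  · intro b _ hb
    simp [hb, hp.2]
  · simp

lemma sum_pi_marg2 {n : ℕ} {α : Type} [Fintype α] {p : α → ℝ} (hp : IsPmf p) (h : α → ℝ)
    {j k : Fin n} (hjk : j ≠ k) :
    ∑ a : Fin n → α, (∏ i, p (a i)) * (h (a j) * h (a k)) =
      (∑ x, p x * h x) * (∑ x, p x * h x) := by
  have h1 : ∀ a : Fin n → α, (∏ i, p (a i)) * (h (a j) * h (a k)) =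
      ∏ i, (p (a i) * ((if i = j then h (a i) else 1) * (if i = k then h (a i) else 1))) := by
    intro a
    rw [Finset.prod_mul_distrib, Finset.prod_mul_distrib]
    simp
  simp_rw [h1]
  rw [sum_pi_prod (fun i x => p x * ((if i = j then h x else 1) * (if i = k then h x else 1)))]
  rw [← Finset.mul_prod_erase _ _ (Finset.mem_univ j)]
  rw [← Finset.mul_prod_erase _ _ (Finset.mem_erase.2 ⟨hjk.symm, Finset.mem_univ k⟩)]
  rw [Finset.prod_eq_one]
  · simp [hjk, hjk.symm]
  · intro b hb
    simp only [Finset.mem_erase] at hb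
    simp [hb.1, hb.2.1, hp.2]

lemma sum_pi_mean {n : ℕ} {α : Type} [Fintype α] {p : α → ℝ} (hp : IsPmf p) (h : α → ℝ) :
    ∑ a : Fin n → α, (∏ i, p (a i)) * ∑ j, h (a j) = n * ∑ x, p x * h x := by
  simp_rw [Finset.mul_sum]
  rw [Finset.sum_comm]
  simp_rw [sum_pi_marg hp h]
  simp [Finset.mul_sum]

lemma sum_pi_sq {n : ℕ} {α : Type} [Fintype α] {p : α → ℝ} (hp : IsPmf p) (h : α → ℝ)
    (h0 : ∑ x, p x * h x = 0) :
    ∑ a : Fin n → α, (∏ i, p (a i)) * (∑ j, h (a j)) ^ 2 = n * ∑ x, p x * (h x) ^ 2 := by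
  simp_rw [sq, Finset.sum_mul_sum, Finset.mul_sum]
  rw [Finset.sum_comm]
  have : ∀ j : Fin n, ∑ a : Fin n → α, ∑ k, (∏ i, p (a i)) * (h (a j) * h (a k)) =
      ∑ x, p x * (h x * h x) := by
    intro j
    rw [Finset.sum_comm, Finset.sum_eq_single j]
    · exact sum_pi_marg hp (fun x => h x * h x) j
    · intro k _ hk
      rw [sum_pi_marg2 hp h hk.symm, h0, zero_mul]
    · simp
  simp_rw [this]
  simp [Finset.mul_sum]

/-- Weak law of large numbers (one sided). -/
lemma weak_law {α : Type} [Fintype α] {p : α → ℝ} (hp : IsPmf p) (F : α → ℝ) (E : ℝ)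
    (hE : ∑ x, p x * F x = E) {ε η : ℝ} (hε : 0 < ε) (hη : 0 < η) :
    ∃ N : ℕ, ∀ n ≥ N, ∑ a : Fin n → α,
      (if n * (E + ε) < ∑ i, F (a i) then ∏ i, p (a i) else 0) ≤ η := by
  set v := ∑ x, p x * (F x - E) ^ 2 with hv
  have hv0 : 0 ≤ v := Finset.sum_nonneg fun x _ => mul_nonneg (hp.1 x) (sq_nonneg _)
  obtain ⟨N, hN⟩ := exists_nat_gt (v / (ε ^ 2 * η))
  refine ⟨N + 1, fun n hn => ?_⟩
  have hn0 : (0 : ℝ) < n := by exact_mod_cast (by omega : 0 < n)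
  have hNn : (N : ℝ) ≤ n := by exact_mod_cast (by omega : N ≤ n)
  have h0 : ∑ x, p x * (F x - E) = 0 := by
    simp_rw [mul_sub, Finset.sum_sub_distrib, ← Finset.sum_mul]
    rw [hE, hp.2]; ring
  have key := sum_pi_sq (n := n) hp (fun x => F x - E) h0
  have h2 : (n * ε) ^ 2 * ∑ a : Fin n → α,
      (if n * (E + ε) < ∑ i, F (a i) then ∏ i, p (a i) else 0) ≤ n * v := by
    rw [hv, ← key, Finset.mul_sum]
    refine Finset.sum_le_sum fun a _ => ?_
    have hpa : 0 ≤ ∏ i, p (a i) := Finset.prod_nonneg fun i _ => hp.1 _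
    split_ifs with hc
    · rw [mul_comm]
      refine mul_le_mul_of_nonneg_left ?_ hpa
      have : ∑ j, (F (a j) - E) = ∑ j, F (a j) - n * E := by
        simp [Finset.sum_sub_distrib]
      rw [this]
      apply pow_le_pow_left₀ (by positivity)
      linarith
    · rw [mul_zero]
      exact mul_nonneg hpa (sq_nonneg _)
  have h3 : v ≤ n * (ε ^ 2 * η) := by
    have := (div_lt_iff₀ (by positivity : 0 < ε ^ 2 * η)).1 hN
    nlinarith [mul_le_mul_of_nonneg_right hNn (by positivity : 0 ≤ ε ^ 2 * η)]
  have h4 : (n * ε) ^ 2 * ∑ a : Fin n → α,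
      (if n * (E + ε) < ∑ i, F (a i) then ∏ i, p (a i) else 0) ≤ (n * ε) ^ 2 * η := by
    refine h2.trans ?_
    have := mul_le_mul_of_nonneg_left h3 hn0.le
    nlinarith
  exact le_of_mul_le_mul_left h4 (by positivity)

/-- If the average of `F` under a pmf is at most `B`, some value is at most `B`. -/
lemma exists_le_avg {α : Type} [Fintype α] {w : α → ℝ} (hw : IsPmf w) (F : α → ℝ) {B : ℝ}
    (h : ∑ a, w a * F a ≤ B) : ∃ a, F a ≤ B := by
  by_contra! hc
  have hlt : ∑ a, w a * B < ∑ a, w a * F a := by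
    apply Finset.sum_lt_sum
    · intro a _
      exact mul_le_mul_of_nonneg_left (hc a).le (hw.1 a)
    · by_contra! h2
      have : ∑ a, w a ≤ 0 := by
        refine Finset.sum_nonpos fun a ha => ?_
        by_contra! h3
        have := h2 a ha
        nlinarith [hc a]
      rw [hw.2] at this
      linarith
  rw [← Finset.sum_mul, hw.2] at hlt
  linarith

/-- One-shot covering lemma. -/
lemma covering {A C : Type} [Fintype A] [Fintype C] (μ : A → ℝ) (hμ : ∀ a, 0 ≤ μ a)
    {P : C → ℝ} (hP : IsPmf P) {W : A → C → ℝ} (hW : IsCondPmf W) (G : A → C → Prop)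
    {T : ℝ} (hT : 0 < T) (hG : ∀ a c, G a c → W a c ≤ T * P c) (M : ℕ) :
    ∃ c : Fin M → C, ∑ a, (if ∃ j, G a (c j) then 0 else μ a) ≤
      ∑ a, μ a * ((∑ c, if G a c then 0 else W a c) + Real.exp (-(M / T))) := by
  have hw : IsPmf (fun c : Fin M → C => ∏ j, P (c j)) :=
    ⟨fun c => Finset.prod_nonneg fun i _ => hP.1 _, sum_pi_pmf hP⟩
  refine exists_le_avg hw _ ?_
  simp_rw [Finset.mul_sum]
  rw [Finset.sum_comm]
  refine Finset.sum_le_sum fun a _ => ?_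
  have h1 : ∀ c : Fin M → C, (∏ j, P (c j)) * (if ∃ j, G a (c j) then 0 else μ a) =
      μ a * ∏ j, (if G a (c j) then 0 else P (c j)) := by
    intro c
    split_ifs with h
    · obtain ⟨j, hj⟩ := h
      have h0 : ∏ j, (if G a (c j) then 0 else P (c j)) = 0 :=
        Finset.prod_eq_zero (Finset.mem_univ j) (if_pos hj)
      rw [h0]
      simp
    · push Not at h
      simp [h, mul_comm]
  simp_rw [h1, ← Finset.mul_sum]
  refine mul_le_mul_of_nonneg_left ?_ (hμ a)
  rw [sum_pi_prod (fun _ x => if G a x then 0 else P x)]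
  simp only [Finset.prod_const, Finset.card_univ, Fintype.card_fin]
  set t := ∑ c, if G a c then W a c else 0 with ht
  have ht0 : 0 ≤ t := Finset.sum_nonneg fun c _ => by
    split_ifs
    · exact (hW a).1 c
    · exact le_rfl
  have ht1 : (∑ c, if G a c then 0 else W a c) = 1 - t := by
    rw [← (hW a).2, ht, ← Finset.sum_sub_distrib]
    refine Finset.sum_congr rfl fun c _ => ?_
    split_ifs <;> simp
  have ht2 : 0 ≤ 1 - t := by
    rw [← ht1]
    exact Finset.sum_nonneg fun c _ => by
      split_ifs
      · exact le_rfl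
      · exact (hW a).1 c
  have hs : (∑ c, if G a c then 0 else P c) ≤ 1 - t / T := by
    have : (∑ c, if G a c then 0 else P c) = 1 - ∑ c, if G a c then P c else 0 := by
      rw [← hP.2, ← Finset.sum_sub_distrib]
      refine Finset.sum_congr rfl fun c _ => ?_
      split_ifs <;> simp
    rw [this]
    have : t ≤ T * ∑ c, if G a c then P c else 0 := by
      rw [ht, Finset.mul_sum]
      refine Finset.sum_le_sum fun c _ => ?_
      split_ifs with h
      · exact hG a c h
      · simp
    have := (div_le_iff₀' hT).2 this
    linarith
  have hs0 : 0 ≤ (∑ c, if G a c then 0 else P c) := Finset.sum_nonneg fun c _ => by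
      split_ifs
      · exact le_rfl
      · exact hP.1 c
  rw [ht1]
  calc (∑ c, if G a c then 0 else P c) ^ M ≤ (Real.exp (-(t / T))) ^ M := by
        apply pow_le_pow_left₀ hs0
        have := Real.add_one_le_exp (-(t / T))
        linarith
    _ = Real.exp ((1 - t) * 0 + t * (-(M / T))) := by
        rw [← Real.exp_nat_mul]; congr 1; ring
    _ ≤ (1 - t) * Real.exp 0 + t * Real.exp (-(M / T)) := by
        have := convexOn_exp.2 (Set.mem_univ (0:ℝ)) (Set.mem_univ (-(M / T))) ht2 ht0 (by ring)
        simpa only [smul_eq_mul] using this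
    _ ≤ 1 - t + Real.exp (-(M / T)) := by
        rw [Real.exp_zero]
        nlinarith [Real.exp_pos (-(M / T)), mul_nonneg ht2 (Real.exp_pos (-(M / T))).le]

/-- Pairwise independence of a uniformly random function. -/
lemma card_pair {A Z : Type} [Fintype A] [Fintype Z] [AddCommGroup Z] {a a' : A} (h : a ≠ a')
    (z : Z) : Fintype.card Z * (Finset.univ.filter fun b : A → Z => b a' - b a = z).card =
      Fintype.card (A → Z) := by
  have hc : ∀ z', (Finset.univ.filter fun b : A → Z => b a' - b a = z').card =
      (Finset.univ.filter fun b : A → Z => b a' - b a = z).card := by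
    intro z'
    refine Finset.card_bij (fun b _ => b + Pi.single a' (z - z')) ?_ ?_ ?_
    · intro b hb
      simp only [Finset.mem_filter, Finset.mem_univ, true_and] at hb ⊢
      simp only [Pi.add_apply, Pi.single_eq_same, Pi.single_eq_of_ne h, add_zero]
      rw [← hb]; abel
    · intro b _ b' _ hbb
      simpa using hbb
    · intro b hb
      simp only [Finset.mem_filter, Finset.mem_univ, true_and] at hb
      refine ⟨b - Pi.single a' (z - z'), ?_, by simp⟩
      simp only [Finset.mem_filter, Finset.mem_univ, true_and, Pi.sub_apply, Pi.single_eq_same,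
        Pi.single_eq_of_ne h, sub_zero]
      rw [← hb]; abel
  rw [← Finset.card_univ (α := A → Z),
    Finset.card_eq_sum_card_fiberwise (s := (Finset.univ : Finset (A → Z))) (f := fun b : A → Z => b a' - b a) (t := Finset.univ)
      (by intro _ _; simp)]
  rw [Finset.sum_congr rfl fun z' _ => hc z']
  simp

/-- One-shot random binning lemma. -/
lemma binning {A B Z : Type} [Fintype A] [Fintype B] [Fintype Z] [AddCommGroup Z]
    (P : A × B → ℝ) (hP : IsPmf P) (S : B → Finset A) {K : ℝ}
    (hS : ∀ b, ((S b).card : ℝ) ≤ K) (k : A × B → Z) :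
    ∃ β : A → Z, ∑ ab : A × B,
      (if ab.1 ∈ S ab.2 ∧ ∀ a' ∈ S ab.2, β a' + k (a', ab.2) = β ab.1 + k ab → a' = ab.1
        then 0 else P ab) ≤
      ∑ ab : A × B, (if ab.1 ∈ S ab.2 then 0 else P ab) + K / Fintype.card Z := by
  have hZ : (0 : ℝ) < Fintype.card Z := by exact_mod_cast Fintype.card_pos
  have hF : (0 : ℝ) < Fintype.card (A → Z) := by exact_mod_cast Fintype.card_pos
  have hw : IsPmf (fun _ : A → Z => ((Fintype.card (A → Z) : ℝ))⁻¹) := by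
    refine ⟨fun c => by positivity, ?_⟩
    rw [Finset.sum_const, Finset.card_univ, nsmul_eq_mul, mul_inv_cancel₀ hF.ne']
  refine exists_le_avg hw _ ?_
  have hb : ∀ β : A → Z, ∀ ab : A × B,
      (if ab.1 ∈ S ab.2 ∧ ∀ a' ∈ S ab.2, β a' + k (a', ab.2) = β ab.1 + k ab → a' = ab.1
        then 0 else P ab) ≤ (if ab.1 ∈ S ab.2 then 0 else P ab) +
        P ab * ∑ a' ∈ (S ab.2).erase ab.1,
          (if β a' - β ab.1 = k ab - k (a', ab.2) then (1:ℝ) else 0) := by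
    intro β ab
    have hnn : 0 ≤ P ab * ∑ a' ∈ (S ab.2).erase ab.1,
          (if β a' - β ab.1 = k ab - k (a', ab.2) then (1:ℝ) else 0) :=
      mul_nonneg (hP.1 _) (Finset.sum_nonneg fun a' _ => by split_ifs <;> norm_num)
    by_cases h1 : ab.1 ∈ S ab.2
    · by_cases h2 : ∀ a' ∈ S ab.2, β a' + k (a', ab.2) = β ab.1 + k ab → a' = ab.1
      · rw [if_pos ⟨h1, h2⟩, if_pos h1, zero_add]; exact hnn
      · rw [if_neg (fun h => h2 h.2), if_pos h1, zero_add]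
        push Not at h2
        obtain ⟨a', ha', he, hne⟩ := h2
        refine le_mul_of_one_le_right (hP.1 _) ?_
        have := Finset.single_le_sum (f := fun a' =>
          (if β a' - β ab.1 = k ab - k (a', ab.2) then (1:ℝ) else 0))
          (fun i _ => by split_ifs <;> norm_num) (Finset.mem_erase.2 ⟨hne, ha'⟩)
        refine le_trans ?_ this
        rw [if_pos]
        rw [sub_eq_sub_iff_add_eq_add, he]; abel
    · rw [if_neg (fun h => h1 h.1), if_neg h1]; linarith
  have hcount : ∀ ab : A × B, ∑ β : A → Z, ((Fintype.card (A → Z) : ℝ))⁻¹ *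
      ∑ a' ∈ (S ab.2).erase ab.1,
          (if β a' - β ab.1 = k ab - k (a', ab.2) then (1:ℝ) else 0) ≤ K / Fintype.card Z := by
    intro ab
    rw [← Finset.mul_sum, Finset.sum_comm]
    have : ∀ a' ∈ (S ab.2).erase ab.1, ∑ β : A → Z,
        (if β a' - β ab.1 = k ab - k (a', ab.2) then (1:ℝ) else 0) =
        (Fintype.card (A → Z) : ℝ) / Fintype.card Z := by
      intro a' ha'
      have h := card_pair (Z := Z) (Finset.ne_of_mem_erase ha').symm (k ab - k (a', ab.2))
      rw [eq_div_iff hZ.ne', Finset.sum_boole, mul_comm]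
      exact_mod_cast h
    rw [Finset.sum_congr rfl this, Finset.sum_const, nsmul_eq_mul]
    have hc : (((S ab.2).erase ab.1).card : ℝ) ≤ K :=
      le_trans (by exact_mod_cast Finset.card_erase_le) (hS ab.2)
    calc _ = (((S ab.2).erase ab.1).card : ℝ) / Fintype.card Z := by field_simp
      _ ≤ _ := by gcongr
  calc _ ≤ ∑ β : A → Z, ((Fintype.card (A → Z) : ℝ))⁻¹ * ∑ ab : A × B,
        ((if ab.1 ∈ S ab.2 then 0 else P ab) +
        P ab * ∑ a' ∈ (S ab.2).erase ab.1,
          (if β a' - β ab.1 = k ab - k (a', ab.2) then (1:ℝ) else 0)) := by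
        refine Finset.sum_le_sum fun β _ => mul_le_mul_of_nonneg_left
          (Finset.sum_le_sum fun ab _ => hb β ab) (by positivity)
    _ = ∑ ab : A × B, (if ab.1 ∈ S ab.2 then 0 else P ab) +
        ∑ ab : A × B, P ab * ∑ β : A → Z, ((Fintype.card (A → Z) : ℝ))⁻¹ *
      ∑ a' ∈ (S ab.2).erase ab.1,
          (if β a' - β ab.1 = k ab - k (a', ab.2) then (1:ℝ) else 0) := by
        simp_rw [Finset.sum_add_distrib, mul_add, Finset.sum_add_distrib]
        congr 1
        · rw [← Finset.sum_mul, hw.2, one_mul]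
        · simp_rw [Finset.mul_sum]
          rw [Finset.sum_comm]
          refine Finset.sum_congr rfl fun ab _ => Finset.sum_congr rfl fun β _ =>
            Finset.sum_congr rfl fun a' _ => by ring
    _ ≤ _ := by
        gcongr
        calc _ ≤ ∑ ab : A × B, P ab * (K / Fintype.card Z) :=
              Finset.sum_le_sum fun ab _ => mul_le_mul_of_nonneg_left (hcount ab) (hP.1 _)
          _ = _ := by rw [← Finset.sum_mul, hP.2, one_mul]

end TWR

namespace TWR

lemma iid_nonneg {α β : Type} [Fintype α] [Fintype β] {p : α × β → ℝ} (hp : IsPmf p) (n : ℕ)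
    (ab : (Fin n → α) × (Fin n → β)) : 0 ≤ iid p n ab :=
  Finset.prod_nonneg fun _ _ => hp.1 _

lemma sum_pair {n : ℕ} {α β : Type} [Fintype α] [Fintype β]
    (Φ : (Fin n → α) × (Fin n → β) → ℝ) :
    ∑ ab, Φ ab = ∑ t : Fin n → α × β, Φ (fun i => (t i).1, fun i => (t i).2) :=
  (Equiv.sum_comp (Equiv.arrowProdEquivProdArrow (Fin n) (fun _ => α) (fun _ => β)) Φ).symm

lemma iid_isPmf {α β : Type} [Fintype α] [Fintype β] {p : α × β → ℝ} (hp : IsPmf p) (n : ℕ) :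
    IsPmf (iid p n) := by
  refine ⟨iid_nonneg hp n, ?_⟩
  rw [sum_pair]
  exact sum_pi_pmf hp

lemma iid_mean {α β : Type} [Fintype α] [Fintype β] {p : α × β → ℝ} (hp : IsPmf p) (n : ℕ)
    (F : α → β → ℝ) :
    ∑ ab, iid p n ab * ∑ i, F (ab.1 i) (ab.2 i) = n * ∑ t : α × β, p t * F t.1 t.2 := by
  rw [sum_pair]
  exact sum_pi_mean hp (fun t => F t.1 t.2)

lemma margY_nonneg {α β : Type} [Fintype α] [Fintype β] {p : α × β → ℝ} (hp : IsPmf p) (b : β) :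
    0 ≤ margY p b := Finset.sum_nonneg fun _ _ => hp.1 _

lemma margY_isPmf {α β : Type} [Fintype α] [Fintype β] {p : α × β → ℝ} (hp : IsPmf p) :
    IsPmf (margY p) := by
  refine ⟨margY_nonneg hp, ?_⟩
  have := hp.2
  rw [Fintype.sum_prod_type_right] at this
  exact this

lemma le_margY {α β : Type} [Fintype α] [Fintype β] {p : α × β → ℝ} (hp : IsPmf p) (a : α) (b : β) :
    p (a, b) ≤ margY p b :=
  Finset.single_le_sum (f := fun a => p (a, b)) (fun _ _ => hp.1 _) (Finset.mem_univ a)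

lemma iid_pos {α β : Type} [Fintype α] [Fintype β] {p : α × β → ℝ} (hp : IsPmf p) {n : ℕ}
    {ab : (Fin n → α) × (Fin n → β)} (h : 0 < iid p n ab) (i : Fin n) :
    0 < p (ab.1 i, ab.2 i) := by
  refine lt_of_le_of_ne (hp.1 _) fun h0 => ?_
  exact h.ne' (Finset.prod_eq_zero (Finset.mem_univ i) h0.symm)

lemma logb_prod_fin {n : ℕ} (F : Fin n → ℝ) (h : ∀ i, 0 < F i) :
    Real.logb 2 (∏ i, F i) = ∑ i, Real.logb 2 (F i) := by
  rw [Real.logb_prod]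
  exact fun i _ => (h i).ne'

/-- Core converse inequality. -/
lemma converse_core {α β γ : Type} [Fintype α] [Fintype β] {p : α × β → ℝ}
    (hp : IsPmf p) {n m : ℕ} (hm : 0 < m)
    (f : (Fin n → α) × (Fin n → β) → Fin m) (g : Fin m × (Fin n → β) → Fin n → γ)
    (V : α → β → γ → ℝ) (hV0 : ∀ a b c, 0 ≤ V a b c) (hV1 : ∀ b c, ∑ a, V a b c ≤ 1)
    (hVp : ∀ ab, 0 < iid p n ab → ∀ i, 0 < V (ab.1 i) (ab.2 i) (g (f ab, ab.2) i)) :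
    ∑ ab, iid p n ab * ∑ i, (Real.logb 2 (V (ab.1 i) (ab.2 i) (g (f ab, ab.2) i)) -
      Real.logb 2 (p (ab.1 i, ab.2 i)) + Real.logb 2 (margY p (ab.2 i))) ≤ Real.logb 2 m := by
  have hm' : (0 : ℝ) < m := by exact_mod_cast hm
  have hl2 : 0 < Real.log 2 := Real.log_pos (by norm_num)
  set U : (Fin n → α) × (Fin n → β) → ℝ := fun ab =>
    (∏ i, V (ab.1 i) (ab.2 i) (g (f ab, ab.2) i)) * ∏ i, margY p (ab.2 i) with hU
  have hU0 : ∀ ab, 0 ≤ U ab := fun ab =>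
    mul_nonneg (Finset.prod_nonneg fun _ _ => hV0 _ _ _)
      (Finset.prod_nonneg fun _ _ => margY_nonneg hp _)
  have hUs : ∑ ab, U ab ≤ m := by
    rw [Fintype.sum_prod_type_right]
    have h1 : ∀ b : Fin n → β, ∑ a : Fin n → α, U (a, b) ≤ m * ∏ i, margY p (b i) := by
      intro b
      simp only [hU]
      rw [← Finset.sum_mul]
      refine mul_le_mul_of_nonneg_right ?_ (Finset.prod_nonneg fun _ _ => margY_nonneg hp _)
      calc ∑ a : Fin n → α, ∏ i, V (a i) (b i) (g (f (a, b), b) i)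
          ≤ ∑ a : Fin n → α, ∑ j : Fin m, ∏ i, V (a i) (b i) (g (j, b) i) := by
            refine Finset.sum_le_sum fun a _ => ?_
            exact Finset.single_le_sum (f := fun j => ∏ i, V (a i) (b i) (g (j, b) i))
              (fun j _ => Finset.prod_nonneg fun _ _ => hV0 _ _ _) (Finset.mem_univ (f (a, b)))
        _ = ∑ j : Fin m, ∏ i, ∑ a, V a (b i) (g (j, b) i) := by
            rw [Finset.sum_comm]
            exact Finset.sum_congr rfl fun j _ =>
              sum_pi_prod (fun i a => V a (b i) (g (j, b) i))
        _ ≤ ∑ j : Fin m, (1 : ℝ) := by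
            refine Finset.sum_le_sum fun j _ => Finset.prod_le_one
              (fun i _ => Finset.sum_nonneg fun _ _ => hV0 _ _ _) (fun i _ => hV1 _ _)
        _ = m := by simp
    calc _ ≤ ∑ b : Fin n → β, m * ∏ i, margY p (b i) := Finset.sum_le_sum fun b _ => h1 b
      _ = m := by rw [← Finset.mul_sum, sum_pi_pmf (margY_isPmf hp), mul_one]
  have hterm : ∀ ab, iid p n ab * ∑ i, (Real.logb 2 (V (ab.1 i) (ab.2 i) (g (f ab, ab.2) i)) -
      Real.logb 2 (p (ab.1 i, ab.2 i)) + Real.logb 2 (margY p (ab.2 i))) ≤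
      iid p n ab * Real.logb 2 m + (U ab / m - iid p n ab) / Real.log 2 := by
    intro ab
    rcases (iid_nonneg hp n ab).eq_or_lt with h0 | h0
    · rw [← h0]
      have := hU0 ab
      simp only [zero_mul, zero_add, sub_zero]
      positivity
    · have hpp := iid_pos hp h0
      have hmm : ∀ i, 0 < margY p (ab.2 i) := fun i => (hpp i).trans_le (le_margY hp _ _)
      have hVV := hVp ab h0
      have hUpos : 0 < U ab := mul_pos (Finset.prod_pos fun i _ => hVV i)
        (Finset.prod_pos fun i _ => hmm i)
      have e1 : ∑ i, (Real.logb 2 (V (ab.1 i) (ab.2 i) (g (f ab, ab.2) i)) -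
          Real.logb 2 (p (ab.1 i, ab.2 i)) + Real.logb 2 (margY p (ab.2 i))) =
          Real.logb 2 (U ab) - Real.logb 2 (iid p n ab) := by
        rw [Finset.sum_add_distrib, Finset.sum_sub_distrib, ← logb_prod_fin _ hVV,
          ← logb_prod_fin _ hpp, ← logb_prod_fin _ hmm]
        simp only [hU]
        rw [Real.logb_mul (Finset.prod_pos fun i _ => hVV i).ne'
          (Finset.prod_pos fun i _ => hmm i).ne']
        simp only [iid]
        ring
      rw [e1]
      have e2 : Real.log (U ab) - Real.log (iid p n ab) - Real.log m ≤
          U ab / (iid p n ab * m) - 1 := by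
        have := Real.log_le_sub_one_of_pos (x := U ab / (iid p n ab * m)) (by positivity)
        rw [Real.log_div hUpos.ne' (by positivity), Real.log_mul h0.ne' hm'.ne'] at this
        linarith
      have e3 : iid p n ab * (Real.log (U ab) - Real.log (iid p n ab) - Real.log m) ≤
          U ab / m - iid p n ab := by
        refine (mul_le_mul_of_nonneg_left e2 h0.le).trans (le_of_eq ?_)
        field_simp
      have e4 := div_le_div_of_nonneg_right e3 hl2.le
      simp only [Real.logb]
      refine le_trans (le_of_eq ?_) (add_le_add_right e4 _)
      field_simp
      ring
  calc _ ≤ ∑ ab, (iid p n ab * Real.logb 2 m + (U ab / m - iid p n ab) / Real.log 2) :=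
        Finset.sum_le_sum fun ab _ => hterm ab
    _ = Real.logb 2 m + ((∑ ab, U ab) / m - 1) / Real.log 2 := by
        rw [Finset.sum_add_distrib, ← Finset.sum_mul, (iid_isPmf hp n).2, one_mul,
          ← Finset.sum_div, Finset.sum_sub_distrib, ← Finset.sum_div, (iid_isPmf hp n).2]
    _ ≤ _ := by
        have h1 : (∑ ab, U ab) / m ≤ 1 := (div_le_one hm').2 hUs
        have : ((∑ ab, U ab) / m - 1) / Real.log 2 ≤ 0 :=
          div_nonpos_of_nonpos_of_nonneg (by linarith) hl2.le
        linarith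

lemma condH_eq {α β : Type} [Fintype α] [Fintype β] (p : α × β → ℝ) :
    condH p = ∑ t : α × β, p t * (Real.logb 2 (margY p t.2) - Real.logb 2 (p t)) := by
  unfold condH H2
  simp_rw [mul_sub, Finset.sum_sub_distrib]
  have : ∑ b, (∑ a, p (a, b)) * Real.logb 2 (∑ a, p (a, b)) =
      ∑ t : α × β, p t * Real.logb 2 (margY p t.2) := by
    rw [Fintype.sum_prod_type_right]
    simp_rw [← Finset.sum_mul]
    rfl
  rw [this]; ring

lemma condH_nonneg {α β : Type} [Fintype α] [Fintype β] {p : α × β → ℝ} (hp : IsPmf p) :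
    0 ≤ condH p := by
  rw [condH_eq]
  refine Finset.sum_nonneg fun t _ => ?_
  rcases (hp.1 t).eq_or_lt with h | h
  · simp [← h]
  · refine mul_nonneg h.le (sub_nonneg.2 ?_)
    exact (Real.logb_le_logb (by norm_num) h (h.trans_le (le_margY hp t.1 t.2))).2
      (le_margY hp t.1 t.2)

lemma condMI_eq {α β γ : Type} [Fintype α] [Fintype β] [Fintype γ] (P : α × β × γ → ℝ) :
    condMI P = ∑ a, ∑ b, ∑ c, P (a, b, c) * (Real.logb 2 (P (a, b, c)) +
      Real.logb 2 (∑ a', ∑ c', P (a', b, c')) - Real.logb 2 (∑ c', P (a, b, c')) -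
      Real.logb 2 (∑ a', P (a', b, c))) := by
  unfold condMI H2
  simp_rw [mul_sub, mul_add, Finset.sum_sub_distrib, Finset.sum_add_distrib]
  have h1 : ∑ ab : α × β, (∑ c, P (ab.1, ab.2, c)) * Real.logb 2 (∑ c, P (ab.1, ab.2, c)) =
      ∑ a, ∑ b, ∑ c, P (a, b, c) * Real.logb 2 (∑ c', P (a, b, c')) := by
    rw [Fintype.sum_prod_type]
    simp_rw [← Finset.sum_mul]
  have h2 : ∑ bc : β × γ, (∑ a, P (a, bc.1, bc.2)) * Real.logb 2 (∑ a, P (a, bc.1, bc.2)) =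
      ∑ a, ∑ b, ∑ c, P (a, b, c) * Real.logb 2 (∑ a', P (a', b, c)) := by
    rw [Fintype.sum_prod_type]
    conv_rhs => rw [Finset.sum_comm]
    refine Finset.sum_congr rfl fun b _ => ?_
    rw [Finset.sum_comm]
    refine Finset.sum_congr rfl fun c _ => ?_
    rw [Finset.sum_mul]
  have h3 : ∑ t : α × β × γ, P t * Real.logb 2 (P t) =
      ∑ a, ∑ b, ∑ c, P (a, b, c) * Real.logb 2 (P (a, b, c)) := by
    simp_rw [Fintype.sum_prod_type]
  have h4 : ∑ b, (∑ a, ∑ c, P (a, b, c)) * Real.logb 2 (∑ a, ∑ c, P (a, b, c)) =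
      ∑ a, ∑ b, ∑ c, P (a, b, c) * Real.logb 2 (∑ a', ∑ c', P (a', b, c')) := by
    rw [Finset.sum_comm]
    simp_rw [← Finset.sum_mul]
  rw [h1, h2, h3, h4]
  ring

end TWR

namespace TWR

lemma conv1_ineq {α β : Type} [Fintype α] [Fintype β] {p : α × β → ℝ} (hp : IsPmf p)
    {n m : ℕ} (hn : 0 < n) (hm : 0 < m)
    (f : (Fin n → α) × (Fin n → β) → Fin m) (g : Fin m × (Fin n → β) → Fin n → α)
    (hK : 0 < Fintype.card α) {δ : ℝ} (hδ0 : 0 < δ) (hδ1 : δ < 1) :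
    condH p ≤ Real.logb 2 m / n - Real.logb 2 (1 - δ) +
      Delta1 p dHam f g * Real.logb 2 (Fintype.card α / δ) := by
  have hn' : (0 : ℝ) < n := by exact_mod_cast hn
  have hK' : (0 : ℝ) < Fintype.card α := by exact_mod_cast hK
  set L := Real.logb 2 (Fintype.card α / δ) with hL
  set V : α → β → α → ℝ := fun a _ c => (if a = c then 1 - δ else 0) + δ / Fintype.card α with hV
  have hVpos : ∀ a b c, 0 < V a b c := by
    intro a b c
    simp only [hV]
    have : 0 < δ / Fintype.card α := by positivity
    split_ifs <;> linarith
  have hVl : ∀ a b c, Real.logb 2 (1 - δ) - dHam a c * L ≤ Real.logb 2 (V a b c) := by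
    intro a b c
    have hd : 0 < δ / Fintype.card α := by positivity
    by_cases h : a = c
    · simp only [hV, dHam, h, if_true, zero_mul, sub_zero]
      exact (Real.logb_le_logb (by norm_num) (by linarith) (by linarith)).2 (by linarith)
    · simp only [hV, dHam, h, if_false, one_mul, zero_add, hL]
      have h1 : Real.logb 2 (δ / Fintype.card α) = - Real.logb 2 (Fintype.card α / δ) := by
        rw [← Real.logb_inv, inv_div]
      have h2 : Real.logb 2 (1 - δ) ≤ 0 :=
        Real.logb_nonpos (by norm_num) (by linarith) (by linarith)
      rw [h1]; linarith
  have hcore := converse_core hp hm f g V (fun a b c => (hVpos a b c).le)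
    (fun b c => by
      simp only [hV]
      rw [Finset.sum_add_distrib]
      simp
      field_simp
      linarith)
    (fun ab _ i => hVpos (ab.1 i) (ab.2 i) _)
  have hlow : ∑ ab, iid p n ab * ∑ i, (Real.logb 2 (1 - δ) -
      dHam (ab.1 i) (g (f ab, ab.2) i) * L +
      (Real.logb 2 (margY p (ab.2 i)) - Real.logb 2 (p (ab.1 i, ab.2 i)))) ≤ Real.logb 2 m := by
    refine le_trans (Finset.sum_le_sum fun ab _ => mul_le_mul_of_nonneg_left
      (Finset.sum_le_sum fun i _ => ?_) (iid_nonneg hp n ab)) hcore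
    have := hVl (ab.1 i) (ab.2 i) (g (f ab, ab.2) i)
    linarith
  have hD : ∑ ab, iid p n ab * ∑ i, dHam (ab.1 i) (g (f ab, ab.2) i) * L =
      n * (Delta1 p dHam f g * L) := by
    unfold Delta1
    rw [Finset.sum_mul, Finset.mul_sum]
    refine Finset.sum_congr rfl fun ab _ => ?_
    rw [← Finset.sum_mul]
    field_simp
  simp_rw [Finset.sum_add_distrib, Finset.sum_sub_distrib, mul_add, mul_sub] at hlow
  rw [Finset.sum_add_distrib, Finset.sum_sub_distrib, hD, ← Finset.sum_mul,
    (iid_isPmf hp n).2] at hlow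
  have hH := iid_mean hp n (fun a b => Real.logb 2 (margY p b) - Real.logb 2 (p (a, b)))
  simp_rw [Finset.sum_sub_distrib, mul_sub] at hH
  rw [hH] at hlow
  have hc := condH_eq p
  simp only [Finset.sum_const, Finset.card_univ, Fintype.card_fin, nsmul_eq_mul, one_mul] at hlow
  simp_rw [mul_sub] at hc
  rw [← hc] at hlow
  have : condH p + Real.logb 2 (1 - δ) - Delta1 p dHam f g * L ≤ Real.logb 2 m / n := by
    rw [le_div_iff₀ hn']
    linarith
  linarith

lemma conv1 {𝒳 𝒴 Yh : Type} [Fintype 𝒳] [Fintype 𝒴] [Fintype Yh]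
    {q : 𝒳 × 𝒴 → ℝ} (hq : IsPmf q) (δ2 : 𝒴 → Yh → ℝ) {d2 r : ℝ}
    (h : RDAchievable q (dHam (α := 𝒳)) δ2 0 d2 r) : condH q ≤ r := by
  have hne : Nonempty (𝒳 × 𝒴) := by
    by_contra hc
    rw [not_nonempty_iff] at hc
    have := hq.2
    simp at this
  obtain ⟨x0, y0⟩ := hne
  have hK : 0 < Fintype.card 𝒳 := Fintype.card_pos_iff.2 ⟨x0⟩
  refine le_of_forall_pos_le_add fun η hη => ?_
  set δ : ℝ := 1 - (2 : ℝ) ^ (-η) with hδ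
  have hpos : (0 : ℝ) < (2 : ℝ) ^ (-η) := by positivity
  have hlt : (2 : ℝ) ^ (-η) < 1 := Real.rpow_lt_one_of_one_lt_of_neg (by norm_num) (by linarith)
  set L := Real.logb 2 (Fintype.card 𝒳 / δ) with hL
  have hL0 : 0 ≤ L := by
    refine Real.logb_nonneg (by norm_num) ?_
    rw [le_div_iff₀ (by linarith)]
    have : (1 : ℝ) ≤ Fintype.card 𝒳 := by exact_mod_cast hK
    linarith
  refine le_of_forall_pos_le_add fun ε hε => ?_
  obtain ⟨n, m, f, g1, g2, hn, hr, hd1, -⟩ := h (ε / (1 + L)) (by positivity)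
  have hm : 0 < m := Fin.pos (f (fun _ => x0, fun _ => y0))
  have := conv1_ineq hq hn hm f g1 hK (δ := δ) (by linarith) (by linarith)
  have h1 : Real.logb 2 (1 - δ) = -η := by
    rw [hδ, sub_sub_cancel, Real.logb_rpow (by norm_num) (by norm_num)]
  rw [h1] at this
  have h2 := mul_le_mul_of_nonneg_right hd1 hL0
  have h3 : ε / (1 + L) + ε / (1 + L) * L = ε := by field_simp
  rw [zero_add] at h2
  linarith

lemma conv2_ineq {α β γ : Type} [Fintype α] [Fintype β] [Fintype γ] {p : α × β → ℝ}
    (hp : IsPmf p) {n m : ℕ} (hn : 0 < n) (hm : 0 < m)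
    (f : (Fin n → α) × (Fin n → β) → Fin m) (g : Fin m × (Fin n → β) → Fin n → γ)
    (c0 : γ) :
    ∃ W : α × β → γ → ℝ, IsCondPmf W ∧
      (∀ F : α → β → γ → ℝ, ∑ a, ∑ b, ∑ c, p (a, b) * W (a, b) c * F a b c =
        (n : ℝ)⁻¹ * ∑ ab, iid p n ab * ∑ i, F (ab.1 i) (ab.2 i) (g (f ab, ab.2) i)) ∧
      condMI (fun t : α × β × γ => p (t.1, t.2.1) * W (t.1, t.2.1) t.2.2) ≤
        Real.logb 2 m / n := by
  have hn' : (0 : ℝ) < n := by exact_mod_cast hn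
  set Q : α × β × γ → ℝ := fun t => (n : ℝ)⁻¹ * ∑ ab, iid p n ab *
    ∑ i, (if (ab.1 i, ab.2 i, g (f ab, ab.2) i) = t then (1 : ℝ) else 0) with hQ
  have hQ0 : ∀ t, 0 ≤ Q t := fun t => mul_nonneg (by positivity) <|
    Finset.sum_nonneg fun ab _ => mul_nonneg (iid_nonneg hp n ab) <|
      Finset.sum_nonneg fun i _ => by split_ifs <;> norm_num
  have hQF : ∀ F : α × β × γ → ℝ, ∑ t, Q t * F t = (n : ℝ)⁻¹ * ∑ ab, iid p n ab *
      ∑ i, F (ab.1 i, ab.2 i, g (f ab, ab.2) i) := by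
    intro F
    simp only [hQ]
    simp_rw [mul_assoc, ← Finset.mul_sum, Finset.sum_mul]
    congr 1
    rw [Finset.sum_comm]
    refine Finset.sum_congr rfl fun ab _ => ?_
    simp_rw [mul_assoc, ← Finset.mul_sum, Finset.sum_mul]
    congr 1
    rw [Finset.sum_comm]
    refine Finset.sum_congr rfl fun i _ => ?_
    simp
  have hQc : ∀ a b, ∑ c, Q (a, b, c) = p (a, b) := by
    intro a b
    have h1 := hQF (fun t => if (t.1, t.2.1) = (a, b) then 1 else 0)
    have h2 := iid_mean hp n (fun a' b' => if (a', b') = (a, b) then 1 else 0)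
    rw [h2] at h1
    simp only [mul_ite, mul_one, mul_zero, Prod.mk.eta, Finset.sum_ite_eq', Finset.mem_univ,
      if_true] at h1
    rw [inv_mul_cancel_left₀ hn'.ne'] at h1
    rw [← h1, Fintype.sum_prod_type, Finset.sum_eq_single a, Fintype.sum_prod_type,
      Finset.sum_eq_single b]
    · simp
    · intro b' _ hb'
      simp [hb']
    · simp
    · intro a' _ ha'
      simp [ha']
    · simp
  have hQle : ∀ a b c, Q (a, b, c) ≤ p (a, b) := fun a b c => by
    rw [← hQc a b]
    exact Finset.single_le_sum (f := fun c => Q (a, b, c)) (fun c _ => hQ0 _) (Finset.mem_univ c)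
  set W : α × β → γ → ℝ := fun ab c =>
    if p ab = 0 then (if c = c0 then 1 else 0) else Q (ab.1, ab.2, c) / p ab with hW
  have hpW : ∀ a b c, p (a, b) * W (a, b) c = Q (a, b, c) := by
    intro a b c
    by_cases h : p (a, b) = 0
    · rw [h, zero_mul]
      exact le_antisymm (hQ0 _) (h ▸ hQle a b c)
    · simp only [hW, h, if_false]
      field_simp
  refine ⟨W, ?_, ?_, ?_⟩
  · rintro ⟨a, b⟩
    by_cases h : p (a, b) = 0
    · simp only [hW, h, if_true]
      exact ⟨fun c => by dsimp only; split_ifs <;> norm_num, by simp⟩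
    · simp only [hW, h, if_false]
      refine ⟨fun c => div_nonneg (hQ0 _) (hp.1 _), ?_⟩
      rw [← Finset.sum_div, hQc, div_self h]
  · intro F
    simp_rw [hpW]
    have := hQF (fun t => F t.1 t.2.1 t.2.2)
    rw [← this]
    simp_rw [Fintype.sum_prod_type]
  · have he : (fun t : α × β × γ => p (t.1, t.2.1) * W (t.1, t.2.1) t.2.2) = Q := by
      funext ⟨a, b, c⟩
      exact hpW a b c
    rw [he, condMI_eq]
    simp_rw [hQc]
    set V : α → β → γ → ℝ := fun a b c => Q (a, b, c) / ∑ a', Q (a', b, c) with hV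
    have hQs : ∀ b c, 0 ≤ ∑ a', Q (a', b, c) := fun b c => Finset.sum_nonneg fun _ _ => hQ0 _
    have hQ1 : ∀ a b c, Q (a, b, c) ≤ ∑ a', Q (a', b, c) := fun a b c =>
      Finset.single_le_sum (f := fun a => Q (a, b, c)) (fun c _ => hQ0 _) (Finset.mem_univ a)
    have hcore := converse_core hp hm f g V (fun a b c => div_nonneg (hQ0 _) (hQs b c))
      (fun b c => by
        simp only [hV]
        rw [← Finset.sum_div]
        exact div_self_le_one _)
      (fun ab hab i => by
        have hpos : 0 < Q (ab.1 i, ab.2 i, g (f ab, ab.2) i) := by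
          simp only [hQ]
          refine mul_pos (by positivity) (Finset.sum_pos' (fun ab' _ =>
            mul_nonneg (iid_nonneg hp n ab') <|
              Finset.sum_nonneg fun i _ => by split_ifs <;> norm_num)
            ⟨ab, Finset.mem_univ _, mul_pos hab (Finset.sum_pos' (fun i _ => by
              split_ifs <;> norm_num) ⟨i, Finset.mem_univ _, by simp⟩)⟩)
        exact div_pos hpos (hpos.trans_le (hQ1 _ _ _)))
    have h3 := hQF (fun t => Real.logb 2 (V t.1 t.2.1 t.2.2) - Real.logb 2 (p (t.1, t.2.1)) +
      Real.logb 2 (margY p t.2.1))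
    have h3' := h3
    rw [Fintype.sum_prod_type] at h3'
    rw [Finset.sum_congr rfl fun a _ => Fintype.sum_prod_type _] at h3'
    calc _ = ∑ a, ∑ b, ∑ c, Q (a, b, c) * (Real.logb 2 (V a b c) - Real.logb 2 (p (a, b)) +
          Real.logb 2 (margY p b)) := by
          refine Finset.sum_congr rfl fun a _ => Finset.sum_congr rfl fun b _ =>
            Finset.sum_congr rfl fun c _ => ?_
          rcases (hQ0 (a, b, c)).eq_or_lt with h | h
          · simp [← h]
          · congr 1
            simp only [hV]
            rw [Real.logb_div h.ne' (h.trans_le (hQ1 a b c)).ne']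
            simp only [margY]
            ring
      _ = (n : ℝ)⁻¹ * _ := h3'
      _ ≤ (n : ℝ)⁻¹ * Real.logb 2 m := mul_le_mul_of_nonneg_left hcore (by positivity)
      _ = _ := by rw [inv_mul_eq_div]

end TWR

namespace TWR

lemma isCompact_condPmf (α β : Type) [Fintype α] [Fintype β] :
    IsCompact {W : α → β → ℝ | IsCondPmf W} := by
  have h : {W : α → β → ℝ | IsCondPmf W} = Set.pi Set.univ (fun _ => stdSimplex ℝ β) := by
    ext W
    simp only [Set.mem_ofPred_eq, Set.mem_pi, Set.mem_univ, true_imp_iff]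
    exact Iff.rfl
  rw [h]
  exact isCompact_univ_pi fun _ => isCompact_stdSimplex ℝ β

lemma continuous_H2 (α : Type) [Fintype α] : Continuous (H2 (α := α)) := by
  unfold H2
  refine Continuous.neg (continuous_finsetSum _ fun a _ => ?_)
  have : Continuous fun x : ℝ => x * Real.logb 2 x := by
    have h : (fun x : ℝ => x * Real.logb 2 x) = fun x => x * Real.log x / Real.log 2 := by
      funext x; simp only [Real.logb]; ring
    rw [h]
    exact Real.continuous_mul_log.div_const _
  exact this.comp (continuous_apply a)

lemma continuous_condMI (α β γ : Type) [Fintype α] [Fintype β] [Fintype γ] :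
    Continuous (condMI (α := α) (β := β) (γ := γ)) := by
  unfold condMI
  refine Continuous.sub (Continuous.sub (Continuous.add ?_ ?_) ?_) ?_
  · exact (continuous_H2 _).comp (by fun_prop)
  · exact (continuous_H2 _).comp (by fun_prop)
  · exact continuous_H2 _
  · exact (continuous_H2 _).comp (by fun_prop)

lemma continuous_condMI_W {α β γ : Type} [Fintype α] [Fintype β] [Fintype γ] (p : α × β → ℝ) :
    Continuous fun W : α × β → γ → ℝ =>
      condMI (fun t : α × β × γ => p (t.1, t.2.1) * W (t.1, t.2.1) t.2.2) :=
  (continuous_condMI α β γ).comp (by fun_prop)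

lemma condRD_le {α β γ : Type} [Fintype α] [Fintype β] [Fintype γ] (p : α × β → ℝ)
    (δ : α → γ → ℝ) {d : ℝ} {W : α × β → γ → ℝ} (hW : IsCondPmf W)
    (hd : (∑ a, ∑ b, ∑ c, p (a, b) * W (a, b) c * δ a c) ≤ d) :
    condRD p δ d ≤ condMI (fun t : α × β × γ => p (t.1, t.2.1) * W (t.1, t.2.1) t.2.2) := by
  unfold condRD
  refine csInf_le ?_ ⟨W, hW, hd, rfl⟩
  obtain ⟨B, hB⟩ := (isCompact_condPmf (α × β) γ).bddBelow_image
    (continuous_condMI_W p).continuousOn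
  refine ⟨B, ?_⟩
  rintro _ ⟨W', hW', _, rfl⟩
  exact hB ⟨W', hW', rfl⟩

lemma condRD_limit {α β γ : Type} [Fintype α] [Fintype β] [Fintype γ] (p : α × β → ℝ)
    (δ : α → γ → ℝ) {d r : ℝ}
    (h : ∀ ε > (0:ℝ), ∃ W : α × β → γ → ℝ, IsCondPmf W ∧
      (∑ a, ∑ b, ∑ c, p (a, b) * W (a, b) c * δ a c) ≤ d + ε ∧
      condMI (fun t : α × β × γ => p (t.1, t.2.1) * W (t.1, t.2.1) t.2.2) ≤ r + ε) :
    condRD p δ d ≤ r := by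
  set D : (α × β → γ → ℝ) → ℝ := fun W => ∑ a, ∑ b, ∑ c, p (a, b) * W (a, b) c * δ a c with hD
  set I : (α × β → γ → ℝ) → ℝ := fun W =>
    condMI (fun t : α × β × γ => p (t.1, t.2.1) * W (t.1, t.2.1) t.2.2) with hI
  have hDc : Continuous D := by fun_prop
  have hIc : Continuous I := continuous_condMI_W p
  set ε : ℕ → ℝ := fun k => 1 / ((k : ℝ) + 1) with hε
  have hε0 : ∀ k, 0 < ε k := fun k => by simp only [hε]; positivity
  set S : ℕ → Set (α × β → γ → ℝ) := fun k =>
    {W | IsCondPmf W} ∩ ({W | D W ≤ d + ε k} ∩ {W | I W ≤ r + ε k}) with hS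
  have hcl : ∀ k, IsClosed ({W | D W ≤ d + ε k} ∩ {W | I W ≤ r + ε k}) := fun k =>
    (isClosed_le hDc continuous_const).inter (isClosed_le hIc continuous_const)
  have hcomp := isCompact_condPmf (α × β) γ
  have hmono : ∀ k, ε (k + 1) ≤ ε k := by
    intro k
    simp only [hε]
    push_cast
    apply one_div_le_one_div_of_le <;> linarith [(Nat.cast_nonneg k : (0:ℝ) ≤ k)]
  have hne := IsCompact.nonempty_iInter_of_sequence_nonempty_isCompact_isClosed S
    (fun k W hW => ⟨hW.1, le_trans hW.2.1 (add_le_add le_rfl (hmono k)),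
      le_trans hW.2.2 (add_le_add le_rfl (hmono k))⟩)
    (fun k => by
      obtain ⟨W, h1, h2, h3⟩ := h (ε k) (hε0 k)
      exact ⟨W, h1, h2, h3⟩)
    (hcomp.inter_right (hcl 0)) (fun k => hcomp.isClosed.inter (hcl k))
  obtain ⟨W, hW⟩ := hne
  rw [Set.mem_iInter] at hW
  have hlim : Filter.Tendsto ε Filter.atTop (nhds 0) := tendsto_one_div_add_atTop_nhds_zero_nat
  have h1 : D W ≤ d := by
    have := hlim.const_add d
    rw [add_zero] at this
    exact ge_of_tendsto' this fun k => (hW k).2.1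
  have h2 : I W ≤ r := by
    have := hlim.const_add r
    rw [add_zero] at this
    exact ge_of_tendsto' this fun k => (hW k).2.2
  exact (condRD_le p δ (hW 0).1 h1).trans h2

lemma swap_isPmf {α β : Type} [Fintype α] [Fintype β] {q : α × β → ℝ} (hq : IsPmf q) :
    IsPmf (swap q) := by
  refine ⟨fun t => hq.1 _, ?_⟩
  have := hq.2
  rw [← Equiv.sum_comp (Equiv.prodComm β α)] at this
  exact this

lemma conv2 {𝒳 𝒴 Yh : Type} [Fintype 𝒳] [Fintype 𝒴] [Fintype Yh]
    {q : 𝒳 × 𝒴 → ℝ} (hq : IsPmf q) (δ2 : 𝒴 → Yh → ℝ) {d2 r : ℝ}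
    (h : RDAchievable q (dHam (α := 𝒳)) δ2 0 d2 r) : condRD (swap q) δ2 d2 ≤ r := by
  have hne : Nonempty (𝒳 × 𝒴) := by
    by_contra hc
    rw [not_nonempty_iff] at hc
    have := hq.2
    simp at this
  obtain ⟨x0, y0⟩ := hne
  refine condRD_limit _ _ fun ε hε => ?_
  obtain ⟨n, m, f, g1, g2, hn, hr, -, hd2⟩ := h ε hε
  have hm : 0 < m := Fin.pos (f (fun _ => x0, fun _ => y0))
  obtain ⟨W, h1, h2, h3⟩ := conv2_ineq (swap_isPmf hq) hn hm
    (fun yx => f (yx.2, yx.1)) g2 (g2 (⟨0, hm⟩, fun _ => x0) ⟨0, hn⟩)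
  refine ⟨W, h1, ?_, h3.trans hr⟩
  refine le_trans (le_of_eq ?_) hd2
  rw [h2 (fun a _ c => δ2 a c)]
  unfold Delta2
  rw [← Equiv.sum_comp (Equiv.prodComm (Fin n → 𝒴) (Fin n → 𝒳)), Finset.mul_sum]
  refine Finset.sum_congr rfl fun t _ => ?_
  simp only [iid, swap, Equiv.prodComm_apply, Prod.swap]
  ring

lemma condRD_approx {α β γ : Type} [Fintype α] [Fintype β] [Fintype γ] (p : α × β → ℝ)
    (δ : α → γ → ℝ) (hδn : ∀ y, ∃ yh, δ y yh = 0) {d : ℝ} (hd : 0 ≤ d) {ε : ℝ} (hε : 0 < ε) :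
    ∃ W : α × β → γ → ℝ, IsCondPmf W ∧
      (∑ a, ∑ b, ∑ c, p (a, b) * W (a, b) c * δ a c) ≤ d ∧
      condMI (fun t : α × β × γ => p (t.1, t.2.1) * W (t.1, t.2.1) t.2.2) < condRD p δ d + ε := by
  have hne : {r : ℝ | ∃ W : α × β → γ → ℝ, IsCondPmf W ∧
    (∑ x, ∑ y, ∑ xh, p (x, y) * W (x, y) xh * δ x xh) ≤ d ∧
    r = condMI (fun t : α × β × γ => p (t.1, t.2.1) * W (t.1, t.2.1) t.2.2)}.Nonempty := by
    choose s hs using hδn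
    refine ⟨_, fun ab c => if c = s ab.1 then 1 else 0, ?_, ?_, rfl⟩
    · intro ab
      exact ⟨fun c => by dsimp only; split_ifs <;> norm_num, by simp⟩
    · simp [hs, hd]
  obtain ⟨_, ⟨W, h1, h2, rfl⟩, h3⟩ := exists_lt_of_csInf_lt hne
    (show sInf _ < condRD p δ d + ε by unfold condRD; linarith)
  exact ⟨W, h1, h2, h3⟩

end TWR

namespace TWR

lemma tail_small {ε η : ℝ} (hε : 0 < ε) (hη : 0 < η) :
    ∃ N : ℕ, ∀ n : ℕ, n ≥ N → (2 : ℝ) ^ (-(n * ε)) ≤ η := by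
  have h1 : (2 : ℝ) ^ (-ε) < 1 := Real.rpow_lt_one_of_one_lt_of_neg (by norm_num) (by linarith)
  obtain ⟨N, hN⟩ := exists_pow_lt_of_lt_one hη h1
  refine ⟨N, fun n hn => ?_⟩
  have h2 : (2 : ℝ) ^ (-(n * ε)) = ((2 : ℝ) ^ (-ε)) ^ n := by
    rw [← Real.rpow_natCast, ← Real.rpow_mul (by norm_num)]
    congr 1; ring
  rw [h2]
  exact (pow_le_pow_of_le_one (by positivity) h1.le hn).trans hN.le

/-- Binning for `n`-blocks. -/
lemma binning_n {α β : Type} [Fintype α] [Fintype β] {q : α × β → ℝ} (hq : IsPmf q) (x0 : α)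
    {ε η : ℝ} (hε : 0 < ε) (hη : 0 < η) :
    ∃ N : ℕ, ∀ n ≥ N, ∀ M : ℕ, (2 : ℝ) ^ (n * (condH q + 2 * ε)) ≤ ((M + 1 : ℕ) : ℝ) →
      ∀ k : (Fin n → α) × (Fin n → β) → Fin (M + 1),
      ∃ (b : (Fin n → α) → Fin (M + 1)) (dec : Fin (M + 1) × (Fin n → β) → Fin n → α),
        ∑ ab, (if dec (b ab.1 + k ab, ab.2) = ab.1 then 0 else iid q n ab) ≤ η := by
  obtain ⟨N1, hN1⟩ := tail_small hε (half_pos hη)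
  obtain ⟨N2, hN2⟩ := weak_law hq
    (fun t => Real.logb 2 (margY q t.2) - Real.logb 2 (q t)) (condH q) (condH_eq q).symm hε
    (half_pos hη)
  refine ⟨max N1 N2, fun n hn M hM k => ?_⟩
  have hT1 := hN1 n (le_trans (le_max_left _ _) hn)
  have hT2 := hN2 n (le_trans (le_max_right _ _) hn)
  set K : ℝ := (2 : ℝ) ^ (n * (condH q + ε)) with hK
  have hK0 : 0 < K := by positivity
  set S : (Fin n → β) → Finset (Fin n → α) := fun y => Finset.univ.filter fun x =>
    0 < iid q n (x, y) ∧ ∏ i, margY q (y i) ≤ K * iid q n (x, y) with hS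
  have hcard : ∀ y, ((S y).card : ℝ) ≤ K := by
    intro y
    by_cases hy : 0 < ∏ i, margY q (y i)
    · have h1 : ((S y).card : ℝ) * ∏ i, margY q (y i) ≤ K * ∏ i, margY q (y i) := by
        calc ((S y).card : ℝ) * ∏ i, margY q (y i) = ∑ x ∈ S y, ∏ i, margY q (y i) := by simp
          _ ≤ ∑ x ∈ S y, K * iid q n (x, y) := Finset.sum_le_sum fun x hx => by
              simp only [hS, Finset.mem_filter] at hx
              exact hx.2.2
          _ ≤ ∑ x, K * iid q n (x, y) := Finset.sum_le_sum_of_subset_of_nonneg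
              (Finset.subset_univ _) fun x _ _ => mul_nonneg hK0.le (iid_nonneg hq n _)
          _ = K * ∏ i, margY q (y i) := by
              rw [← Finset.mul_sum]
              congr 1
              exact sum_pi_prod (fun i a => q (a, y i))
      exact le_of_mul_le_mul_right h1 hy
    · have : S y = ∅ := by
        rw [Finset.eq_empty_iff_forall_notMem]
        intro x hx
        simp only [hS, Finset.mem_filter] at hx
        refine hy (Finset.prod_pos fun i _ => ?_)
        exact (iid_pos hq hx.2.1 i).trans_le (le_margY hq _ _)
      rw [this]; simpa using hK0.le
  obtain ⟨b, hb⟩ := binning (iid q n) (iid_isPmf hq n) S hcard k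
  refine ⟨b, fun my => if h : ∃ x, x ∈ S my.2 ∧ b x + k (x, my.2) = my.1 then h.choose
    else fun _ => x0, ?_⟩
  calc _ ≤ _ := Finset.sum_le_sum fun ab _ => ?_
    _ ≤ _ := hb
    _ ≤ η / 2 + η / 2 := add_le_add ?_ ?_
    _ = η := by ring
  · have hnn := iid_nonneg hq n ab
    by_cases hc : ab.1 ∈ S ab.2 ∧ ∀ a' ∈ S ab.2, b a' + k (a', ab.2) = b ab.1 + k ab → a' = ab.1
    · have hex : ∃ x, x ∈ S ab.2 ∧ b x + k (x, ab.2) = b ab.1 + k ab := ⟨ab.1, hc.1, rfl⟩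
      rw [if_pos hc, if_pos]
      simp only
      rw [dif_pos hex]
      exact hc.2 _ hex.choose_spec.1 hex.choose_spec.2
    · rw [if_neg hc]
      split_ifs <;> linarith
  · refine le_trans ?_ hT2
    rw [sum_pair]
    refine Finset.sum_le_sum fun t _ => ?_
    have hnn : 0 ≤ ∏ i, q (t i) := Finset.prod_nonneg fun _ _ => hq.1 _
    have he : iid q n (fun i => (t i).1, fun i => (t i).2) = ∏ i, q (t i) := rfl
    rw [he]
    split_ifs with h1 h2 h2
    · exact hnn
    · exact le_rfl
    · exact le_rfl
    · by_contra! hpos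
      apply h1
      simp only [hS, Finset.mem_filter, Finset.mem_univ, true_and]
      rw [he]
      refine ⟨hpos, ?_⟩
      have hqi : ∀ i, 0 < q (t i) := fun i => iid_pos (ab := (fun i => (t i).1, fun i => (t i).2)) hq
        (by rw [he]; exact hpos) i
      have hmi : ∀ i, 0 < margY q (t i).2 := fun i => (hqi i).trans_le (le_margY hq _ _)
      rw [← Real.logb_le_logb (b := 2) (by norm_num) (Finset.prod_pos fun i _ => hmi i)
        (by positivity), Real.logb_mul hK0.ne' hpos.ne', hK,
        Real.logb_rpow (by norm_num) (by norm_num), logb_prod_fin _ hmi, logb_prod_fin _ hqi]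
      rw [Finset.sum_sub_distrib] at h2
      linarith
  · refine le_trans ?_ hT1
    rw [Fintype.card_fin, div_le_iff₀ (by positivity)]
    refine le_trans (le_of_eq ?_) (mul_le_mul_of_nonneg_left hM (by positivity))
    rw [hK, ← Real.rpow_add (by norm_num)]
    congr 1; ring

/-- Conditional covering for `n`-blocks. -/
lemma covering_n {α β γ : Type} [Fintype α] [Fintype β] [Fintype γ] {p : α × β → ℝ}
    (hp : IsPmf p) (a0 : α) {W : α × β → γ → ℝ} (hW : IsCondPmf W) (δ : α → γ → ℝ)
    {ε η D I : ℝ} (hε : 0 < ε) (hη : 0 < η)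
    (hD : ∑ a, ∑ b, ∑ c, p (a, b) * W (a, b) c * δ a c = D)
    (hI : condMI (fun t : α × β × γ => p (t.1, t.2.1) * W (t.1, t.2.1) t.2.2) = I) :
    ∃ N : ℕ, ∀ n ≥ N, ∀ M : ℕ, (2 : ℝ) ^ (n * (I + 2 * ε)) ≤ M →
      ∃ c : (Fin n → β) → Fin M → (Fin n → γ),
        ∑ ab, (if ∃ j, ∑ i, δ (ab.1 i) (c ab.2 j i) ≤ n * (D + ε) then 0 else iid p n ab) ≤ η := by
  set PJ : (α × β) × γ → ℝ := fun t => p t.1 * W t.1 t.2 with hPJ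
  have hPJp : IsPmf PJ := by
    refine ⟨fun t => mul_nonneg (hp.1 _) ((hW _).1 _), ?_⟩
    rw [Fintype.sum_prod_type]
    simp only [hPJ, ← Finset.mul_sum, (hW _).2, mul_one, hp.2]
  set P : β → γ → ℝ := fun b c => if margY p b = 0 then W (a0, b) c
    else (∑ a, p (a, b) * W (a, b) c) / margY p b with hP
  have hPm : ∀ b c, margY p b * P b c = ∑ a, p (a, b) * W (a, b) c := by
    intro b c
    by_cases h : margY p b = 0
    · rw [h, zero_mul]
      symm
      refine Finset.sum_eq_zero fun a _ => ?_
      have : p (a, b) = 0 := le_antisymm (h ▸ le_margY hp a b) (hp.1 _)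
      rw [this, zero_mul]
    · simp only [hP, h, if_false]
      field_simp
  have hPp : ∀ b, IsPmf (P b) := by
    intro b
    by_cases h : margY p b = 0
    · have : P b = W (a0, b) := by funext c; simp [hP, h]
      rw [this]; exact hW _
    · refine ⟨fun c => ?_, ?_⟩
      · simp only [hP, h, if_false]
        exact div_nonneg (Finset.sum_nonneg fun a _ => mul_nonneg (hp.1 _) ((hW _).1 _))
          (margY_nonneg hp b)
      · simp only [hP, h, if_false]
        rw [← Finset.sum_div, Finset.sum_comm]
        simp only [← Finset.mul_sum, (hW _).2, mul_one]
        exact div_self h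
  have hPpos : ∀ a b c, 0 < p (a, b) * W (a, b) c → 0 < margY p b * P b c := by
    intro a b c h
    rw [hPm]
    exact h.trans_le (Finset.single_le_sum (f := fun a => p (a, b) * W (a, b) c)
      (fun a _ => mul_nonneg (hp.1 _) ((hW _).1 _)) (Finset.mem_univ a))
  set F1 : (α × β) × γ → ℝ := fun t => Real.logb 2 (W t.1 t.2) - Real.logb 2 (P t.1.2 t.2) with hF1
  set F2 : (α × β) × γ → ℝ := fun t => δ t.1.1 t.2 with hF2
  have hE1 : ∑ t, PJ t * F1 t = I := by
    rw [← hI, condMI_eq, Fintype.sum_prod_type, Fintype.sum_prod_type]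
    refine Finset.sum_congr rfl fun a _ => Finset.sum_congr rfl fun b _ =>
      Finset.sum_congr rfl fun c _ => ?_
    simp only [hPJ, hF1, ← Finset.mul_sum, (hW _).2, mul_one]
    rcases (mul_nonneg (hp.1 (a, b)) ((hW (a, b)).1 c)).eq_or_lt with h | h
    · rw [← h]; simp
    · congr 1
      have hp0 : p (a, b) ≠ 0 := left_ne_zero_of_mul h.ne'
      have hW0 : W (a, b) c ≠ 0 := right_ne_zero_of_mul h.ne'
      have hm0 := left_ne_zero_of_mul (hPpos a b c h).ne'
      have hP0 := right_ne_zero_of_mul (hPpos a b c h).ne'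
      rw [← hPm, Real.logb_mul hp0 hW0, Real.logb_mul hm0 hP0]
      simp only [margY]
      ring
  have hE2 : ∑ t, PJ t * F2 t = D := by
    rw [← hD, Fintype.sum_prod_type, Fintype.sum_prod_type]
  have hη3 : 0 < η / 3 := by positivity
  obtain ⟨N0, hN0⟩ := tail_small hε hη3
  obtain ⟨N1, hN1⟩ := weak_law hPJp F1 I hE1 hε hη3
  obtain ⟨N2, hN2⟩ := weak_law hPJp F2 D hE2 hε hη3
  refine ⟨max N0 (max N1 N2), fun n hn M hM => ?_⟩
  have hT0 := hN0 n (le_trans (le_max_left _ _) hn)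
  have hT1 := hN1 n (le_trans (le_trans (le_max_left _ _) (le_max_right _ _)) hn)
  have hT2 := hN2 n (le_trans (le_trans (le_max_right _ _) (le_max_right _ _)) hn)
  set T : ℝ := (2 : ℝ) ^ (n * (I + ε)) with hT
  have hTpos : 0 < T := by positivity
  set Wn : (Fin n → α) → (Fin n → β) → (Fin n → γ) → ℝ := fun a b c =>
    ∏ i, W (a i, b i) (c i) with hWn
  obtain ⟨G, hG⟩ : ∃ G : (Fin n → β) → (Fin n → α) → (Fin n → γ) → Prop, ∀ b a c, G b a c ↔
      (Wn a b c ≤ T * ∏ i, P (b i) (c i) ∧ ∑ i, δ (a i) (c i) ≤ n * (D + ε)) :=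
    ⟨_, fun _ _ _ => Iff.rfl⟩
  have hcov : ∀ b : Fin n → β, ∃ c : Fin M → (Fin n → γ),
      ∑ a, (if ∃ j, G b a (c j) then 0 else iid p n (a, b)) ≤
      ∑ a, iid p n (a, b) * ((∑ c, if G b a c then 0 else Wn a b c) + Real.exp (-(M / T))) := by
    intro b
    refine covering (fun a => iid p n (a, b)) (fun a => iid_nonneg hp n _)
      (P := fun c => ∏ i, P (b i) (c i)) ?_ (W := fun a c => Wn a b c) ?_ (G b) hTpos
      (fun a c h => ((hG _ _ _).1 h).1) M
    · refine ⟨fun c => Finset.prod_nonneg fun i _ => (hPp _).1 _, ?_⟩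
      rw [sum_pi_prod (fun i c => P (b i) c)]
      exact Finset.prod_eq_one fun i _ => (hPp _).2
    · intro a
      refine ⟨fun c => Finset.prod_nonneg fun i _ => (hW _).1 _, ?_⟩
      simp only [hWn]
      rw [sum_pi_prod (fun i c => W (a i, b i) c)]
      exact Finset.prod_eq_one fun i _ => (hW _).2
  choose c hc using hcov
  refine ⟨c, ?_⟩
  have hexp : Real.exp (-(M / T)) ≤ η / 3 := by
    refine le_trans ?_ hT0
    have h1 : (2 : ℝ) ^ (n * ε) ≤ M / T := by
      rw [le_div_iff₀ hTpos, hT, ← Real.rpow_add (by norm_num)]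
      refine le_trans (le_of_eq ?_) hM
      congr 1; ring
    have h2 : (0 : ℝ) < (2 : ℝ) ^ (n * ε) := by positivity
    rw [Real.rpow_neg (by norm_num), Real.exp_neg]
    refine inv_anti₀ h2 ?_
    have := Real.add_one_le_exp (M / T : ℝ)
    linarith
  have hbad : ∑ ab, iid p n ab * (∑ c, if G ab.2 ab.1 c then 0 else Wn ab.1 ab.2 c) ≤
      η / 3 + η / 3 := by
    refine le_trans ?_ (add_le_add hT1 hT2)
    rw [sum_pair, ← Finset.sum_add_distrib]
    simp_rw [Finset.mul_sum]
    rw [← Fintype.sum_prod_type'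
      (f := fun (s : Fin n → α × β) (c : Fin n → γ) => iid p n (fun i => (s i).1, fun i => (s i).2) *
        (if G (fun i => (s i).2) (fun i => (s i).1) c then 0 else
          Wn (fun i => (s i).1) (fun i => (s i).2) c)), sum_pair]
    refine Finset.sum_le_sum fun t _ => ?_
    have hprod : iid p n (fun i => ((t i).1).1, fun i => ((t i).1).2) *
        Wn (fun i => ((t i).1).1) (fun i => ((t i).1).2) (fun i => (t i).2) = ∏ i, PJ (t i) := by
      simp only [iid, hWn, hPJ]
      rw [← Finset.prod_mul_distrib]
    have hnn : 0 ≤ ∏ i, PJ (t i) := Finset.prod_nonneg fun i _ => hPJp.1 _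
    simp only
    rw [mul_ite, mul_zero, hprod]
    have hn1 : 0 ≤ (if n * (I + ε) < ∑ i, F1 (t i) then ∏ i, PJ (t i) else 0) := by
      split_ifs <;> linarith
    have hn2 : 0 ≤ (if n * (D + ε) < ∑ i, F2 (t i) then ∏ i, PJ (t i) else 0) := by
      split_ifs <;> linarith
    by_cases hg : G (fun i => ((t i).1).2) (fun i => ((t i).1).1) (fun i => (t i).2)
    · rw [if_pos hg]; linarith
    · rw [if_neg hg]
      rcases hnn.eq_or_lt with h0 | h0
      · linarith
      · by_cases h2 : n * (D + ε) < ∑ i, F2 (t i)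
        · rw [if_pos h2]; linarith
        · have h1 : n * (I + ε) < ∑ i, F1 (t i) := by
            by_contra! h1
            refine hg ((hG _ _ _).2 ⟨?_, not_lt.1 h2⟩)
            have hPJi : ∀ i, 0 < p (t i).1 * W (t i).1 (t i).2 := fun i =>
              lt_of_le_of_ne (hPJp.1 _) fun h => h0.ne' (Finset.prod_eq_zero (Finset.mem_univ i) h.symm)
            have hWi : ∀ i, 0 < W (t i).1 (t i).2 := fun i =>
              lt_of_le_of_ne ((hW _).1 _) (right_ne_zero_of_mul (hPJi i).ne').symm
            have hPi : ∀ i, 0 < P (t i).1.2 (t i).2 := fun i =>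
              lt_of_le_of_ne ((hPp _).1 _)
                (right_ne_zero_of_mul (hPpos (t i).1.1 (t i).1.2 (t i).2 (hPJi i)).ne').symm
            have hPpr : 0 < ∏ i, P (t i).1.2 (t i).2 := Finset.prod_pos fun i _ => hPi i
            simp only [hWn, Prod.mk.eta]
            rw [← Real.logb_le_logb (b := 2) (by norm_num) (Finset.prod_pos fun i _ => hWi i)
              (by positivity), Real.logb_mul hTpos.ne' hPpr.ne', hT,
              Real.logb_rpow (by norm_num) (by norm_num), logb_prod_fin _ hWi, logb_prod_fin _ hPi]
            simp only [hF1, Finset.sum_sub_distrib] at h1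
            linarith
          rw [if_pos h1]; linarith
  calc ∑ ab, (if ∃ j, ∑ i, δ (ab.1 i) (c ab.2 j i) ≤ n * (D + ε) then 0 else iid p n ab)
      ≤ ∑ ab, (if ∃ j, G ab.2 ab.1 (c ab.2 j) then 0 else iid p n ab) := by
        refine Finset.sum_le_sum fun ab _ => ?_
        have hnn := iid_nonneg hp n ab
        by_cases h : ∃ j, G ab.2 ab.1 (c ab.2 j)
        · obtain ⟨j, hj⟩ := h
          rw [if_pos ⟨j, ((hG _ _ _).1 hj).2⟩, if_pos ⟨j, hj⟩]
        · rw [if_neg h]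
          split_ifs <;> linarith
    _ ≤ ∑ ab, iid p n ab * ((∑ c, if G ab.2 ab.1 c then 0 else Wn ab.1 ab.2 c) +
          Real.exp (-(M / T))) := by
        rw [Fintype.sum_prod_type_right, Fintype.sum_prod_type_right]
        exact Finset.sum_le_sum fun b _ => hc b
    _ = ∑ ab, iid p n ab * (∑ c, if G ab.2 ab.1 c then 0 else Wn ab.1 ab.2 c) +
          Real.exp (-(M / T)) := by
        simp_rw [mul_add, Finset.sum_add_distrib]
        rw [← Finset.sum_mul, (iid_isPmf hp n).2, one_mul]
    _ ≤ η := by linarith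

lemma achiev {𝒳 𝒴 Yh : Type} [Fintype 𝒳] [Fintype 𝒴] [Fintype Yh]
    (q : 𝒳 × 𝒴 → ℝ) (hq : IsPmf q)
    (δ2 : 𝒴 → Yh → ℝ) (d2max : ℝ)
    (hδ2 : ∀ y yh, 0 ≤ δ2 y yh ∧ δ2 y yh ≤ d2max)
    (hδ2n : ∀ y, ∃ yh, δ2 y yh = 0)
    (d2 : ℝ) (hd2 : 0 ≤ d2) :
    CRAchievable q (dHam (α := 𝒳)) δ2 0 d2 (max (condH q) (condRD (swap q) δ2 d2)) := by
  intro ε hε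
  have hne : Nonempty (𝒳 × 𝒴) := by
    by_contra hc
    rw [not_nonempty_iff] at hc
    have := hq.2
    simp at this
  obtain ⟨x0, y0⟩ := hne
  have hdm : 0 ≤ d2max := by
    obtain ⟨yh, hyh⟩ := hδ2n y0
    exact (hδ2 y0 yh).1.trans (hδ2 y0 yh).2
  set R := max (condH q) (condRD (swap q) δ2 d2) with hR
  obtain ⟨W, hW, hWd, hWI⟩ := condRD_approx (swap q) δ2 hδ2n hd2 (by positivity : 0 < ε / 4)
  set η : ℝ := min ε (ε / (2 * (d2max + 1))) with hη
  have hη0 : 0 < η := lt_min hε (by positivity)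
  have hηε : η ≤ ε := min_le_left _ _
  have hηd : d2max * η ≤ ε / 2 := by
    have h1 : η ≤ ε / (2 * (d2max + 1)) := min_le_right _ _
    rw [le_div_iff₀ (by positivity)] at h1
    nlinarith
  obtain ⟨N1, hN1⟩ := binning_n hq x0 (by positivity : 0 < ε / 8) hη0
  obtain ⟨N2, hN2⟩ := covering_n (swap_isPmf hq) y0 hW δ2 (by positivity : 0 < ε / 8) hη0 rfl rfl
  obtain ⟨N3, hN3⟩ := exists_nat_gt (2 / ε)
  set n := max (max N1 N2) (N3 + 1) with hn
  have hnN1 : N1 ≤ n := (le_max_left _ _).trans (le_max_left _ _)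
  have hnN2 : N2 ≤ n := (le_max_right _ _).trans (le_max_left _ _)
  have hnN3 : N3 + 1 ≤ n := le_max_right _ _
  have hnpos : 0 < n := by omega
  clear_value n
  have hn' : (0 : ℝ) < n := by exact_mod_cast hnpos
  have hnε : 1 ≤ n * (ε / 2) := by
    have h1 : (N3 : ℝ) ≤ n := by exact_mod_cast (by omega : N3 ≤ n)
    have h2 : 2 / ε < n := hN3.trans_le h1
    rw [div_lt_iff₀ hε] at h2
    linarith
  have hR0 : 0 ≤ R := (condH_nonneg hq).trans (le_max_left _ _)
  set B : ℝ := (2 : ℝ) ^ (n * (R + ε / 2)) with hB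
  have hB1 : 1 ≤ B := Real.one_le_rpow (by norm_num) (by positivity)
  obtain ⟨M, hM⟩ : ∃ M : ℕ, ⌈B⌉₊ = M + 1 := by
    have : 0 < ⌈B⌉₊ := Nat.ceil_pos.2 (by linarith)
    exact ⟨⌈B⌉₊ - 1, by omega⟩
  have hBM : B ≤ ((M + 1 : ℕ) : ℝ) := by rw [← hM]; exact Nat.le_ceil B
  have hMB : ((M + 1 : ℕ) : ℝ) ≤ 2 * B := by
    rw [← hM]
    have := Nat.ceil_lt_add_one (by linarith : 0 ≤ B)
    linarith
  obtain ⟨c, hc⟩ := hN2 n hnN2 (M + 1) (by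
    refine le_trans (Real.rpow_le_rpow_of_exponent_le (by norm_num) ?_) hBM
    refine mul_le_mul_of_nonneg_left ?_ hn'.le
    have := le_max_right (condH q) (condRD (swap q) δ2 d2)
    linarith)
  set D := ∑ a, ∑ b, ∑ c, swap q (a, b) * W (a, b) c * δ2 a c with hD
  set good : (Fin n → 𝒳) × (Fin n → 𝒴) → Fin (M + 1) → Prop := fun xy j =>
    ∑ i, δ2 (xy.2 i) (c xy.1 j i) ≤ n * (D + ε / 8) with hgood
  set k : (Fin n → 𝒳) × (Fin n → 𝒴) → Fin (M + 1) := fun xy =>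
    if h : ∃ j, good xy j then h.choose else 0 with hk
  have hkg : ∀ xy, (∃ j, good xy j) → good xy (k xy) := by
    intro xy h
    simp only [hk]
    rw [dif_pos h]
    exact h.choose_spec
  obtain ⟨b, dec, hdec⟩ := hN1 n hnN1 M (by
    refine le_trans (Real.rpow_le_rpow_of_exponent_le (by norm_num) ?_) hBM
    refine mul_le_mul_of_nonneg_left ?_ hn'.le
    have := le_max_left (condH q) (condRD (swap q) δ2 d2)
    linarith) k
  have hcx : ∑ xy, (if ∃ j, good xy j then 0 else iid q n xy) ≤ η := by
    rw [← Equiv.sum_comp (Equiv.prodComm (Fin n → 𝒴) (Fin n → 𝒳))]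
    exact hc
  refine ⟨n, M + 1, fun xy => b xy.1 + k xy, dec, fun mx => c mx.2 (mx.1 - b mx.2),
    fun my => c (dec my) (my.1 - b (dec my)), fun mx => mx.2, hnpos, ?_, ?_, ?_, ?_, ?_⟩
  · rw [div_le_iff₀ hn']
    have h1 : Real.logb 2 ((M + 1 : ℕ) : ℝ) ≤ Real.logb 2 (2 * B) :=
      (Real.logb_le_logb (by norm_num) (by positivity) (by positivity)).2 hMB
    rw [Real.logb_mul (by norm_num) (by positivity), hB,
      Real.logb_rpow (by norm_num) (by norm_num), Real.logb_self_eq_one (by norm_num)] at h1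
    nlinarith
  · rw [zero_add]
    refine le_trans ?_ (hdec.trans hηε)
    unfold Delta1
    refine Finset.sum_le_sum fun xy _ => ?_
    have hnn := iid_nonneg hq n xy
    by_cases h : dec (b xy.1 + k xy, xy.2) = xy.1
    · simp [h, dHam]
    · rw [if_neg h]
      refine mul_le_of_le_one_right hnn ?_
      rw [inv_mul_le_iff₀ hn', mul_one]
      calc _ ≤ ∑ i : Fin n, (1 : ℝ) := Finset.sum_le_sum fun i _ => by
            unfold dHam; split_ifs <;> norm_num
        _ = n := by simp
  · have hD2 : D ≤ d2 := hWd
    have hb : Delta2 q δ2 (fun xy => b xy.1 + k xy) (fun mx => c mx.2 (mx.1 - b mx.2)) ≤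
        ∑ xy, (iid q n xy * (d2 + ε / 8) +
          d2max * (if ∃ j, good xy j then 0 else iid q n xy)) := by
      unfold Delta2
      refine Finset.sum_le_sum fun xy _ => ?_
      have hnn := iid_nonneg hq n xy
      simp only [add_sub_cancel_left]
      by_cases h : ∃ j, good xy j
      · rw [if_pos h, mul_zero, add_zero]
        refine mul_le_mul_of_nonneg_left ?_ hnn
        rw [inv_mul_le_iff₀ hn']
        refine (hkg xy h).trans (mul_le_mul_of_nonneg_left ?_ hn'.le)
        linarith
      · rw [if_neg h]
        have h1 : (n : ℝ)⁻¹ * ∑ i, δ2 (xy.2 i) (c xy.1 (k xy) i) ≤ d2max := by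
          rw [inv_mul_le_iff₀ hn']
          calc _ ≤ ∑ i : Fin n, d2max := Finset.sum_le_sum fun i _ => (hδ2 _ _).2
            _ = n * d2max := by simp
        have h2 := mul_le_mul_of_nonneg_left h1 hnn
        have h3 : 0 ≤ iid q n xy * (d2 + ε / 8) := by positivity
        linarith
    refine hb.trans ?_
    rw [Finset.sum_add_distrib, ← Finset.sum_mul, (iid_isPmf hq n).2, ← Finset.mul_sum, one_mul]
    have := mul_le_mul_of_nonneg_left hcx hdm
    linarith
  · refine le_trans (Finset.sum_le_sum fun xy _ => ?_) (hdec.trans hηε)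
    have hnn := iid_nonneg hq n xy
    by_cases h : dec (b xy.1 + k xy, xy.2) = xy.1
    · rw [if_pos h.symm, if_pos h]
    · rw [if_neg (Ne.symm h), if_neg h]
  · refine le_trans (Finset.sum_le_sum fun xy _ => ?_) (hdec.trans hηε)
    have hnn := iid_nonneg hq n xy
    by_cases h : dec (b xy.1 + k xy, xy.2) = xy.1
    · simp [h]
    · rw [if_neg h]
      split_ifs <;> linarith

lemma CR_imp_RD {𝒳 𝒴 Xh Yh : Type} [Fintype 𝒳] [Fintype 𝒴] [Fintype Xh] [Fintype Yh]
    {q : 𝒳 × 𝒴 → ℝ} {δ1 : 𝒳 → Xh → ℝ} {δ2 : 𝒴 → Yh → ℝ} {d1 d2 r : ℝ}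
    (h : CRAchievable q δ1 δ2 d1 d2 r) : RDAchievable q δ1 δ2 d1 d2 r := by
  intro ε hε
  obtain ⟨n, m, f, g1, g2, -, -, h1, h2, h3, h4, -⟩ := h ε hε
  exact ⟨n, m, f, g1, g2, h1, h2, h3, h4⟩

end TWR

open TWR in
/-- Corollary 5: if `δ1` is a Hamming distortion measure,
then `R(0,d2) = R_CR(0,d2) = max{H(X|Y), R_{Y|X}(d2)}`. -/
theorem rd_one_lossless
    {𝒳 𝒴 Yh : Type} [Fintype 𝒳] [Fintype 𝒴] [Fintype Yh]
    (q : 𝒳 × 𝒴 → ℝ) (hq : IsPmf q)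
    (δ2 : 𝒴 → Yh → ℝ) (d2max : ℝ)
    (hδ2 : ∀ y yh, 0 ≤ δ2 y yh ∧ δ2 y yh ≤ d2max)
    (hδ2n : ∀ y, ∃ yh, δ2 y yh = 0)
    (d2 : ℝ) (hd2 : 0 ≤ d2) :
    RD q (dHam (α := 𝒳)) δ2 0 d2 = CRRD q (dHam (α := 𝒳)) δ2 0 d2 ∧
    RD q (dHam (α := 𝒳)) δ2 0 d2 = max (condH q) (condRD (swap q) δ2 d2) := by
  have hA := achiev q hq δ2 d2max hδ2 hδ2n d2 hd2
  have h0 : 0 ≤ max (condH q) (condRD (swap q) δ2 d2) :=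
    (condH_nonneg hq).trans (le_max_left _ _)
  have hRD : RD q (dHam (α := 𝒳)) δ2 0 d2 = max (condH q) (condRD (swap q) δ2 d2) :=
    IsLeast.csInf_eq ⟨⟨h0, CR_imp_RD hA⟩,
      fun r hr => max_le (conv1 hq δ2 hr.2) (conv2 hq δ2 hr.2)⟩
  have hCR : CRRD q (dHam (α := 𝒳)) δ2 0 d2 = max (condH q) (condRD (swap q) δ2 d2) :=
    IsLeast.csInf_eq ⟨⟨h0, hA⟩,
      fun r hr => max_le (conv1 hq δ2 (CR_imp_RD hr.2)) (conv2 hq δ2 (CR_imp_RD hr.2))⟩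
  exact ⟨hRD.trans hCR.symm, hRD⟩
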